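/- arXiv:1210.3488 — 4 statements merged into one kernel-verified Lean document; each statement's English description precedes it below -/
import Mathlib

section
/- Let n ≥ 2 and let R be a commutative domain with 1/2 ∈ R. If l : T_n(R) → T_n(R) is a Lie isomorphism of the algebra of n×n upper triangular matrices over R, then l = m + n₀, where m : T_n(R) → T_n(R) is an algebra isomorphism or the negative of an algebra anti-isomorphism, and n₀ : T_n(R) → R·1 is an R-linear map with n₀([x, y]) = 0 for all x, y ∈ T_n(R). -/
open Matrix

set_option synthInstance.maxHeartbeats 1000000
set_option maxHeartbeats 1000000

/-- The algebra `T_n(R)` of `n × n` upper triangular matrices over `R`,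
realized as a subalgebra of the full matrix algebra. -/
def upperTriangularAlgebra (n : ℕ) (R : Type*) [CommRing R] :
    Subalgebra R (Matrix (Fin n) (Fin n) R) where
  carrier := {x | x.BlockTriangular (id : Fin n → Fin n)}
  add_mem' hx hy := hx.add hy
  mul_mem' hx hy := hx.mul hy
  algebraMap_mem' r := by
    intro i j hij
    rw [Matrix.algebraMap_matrix_apply]
    simp only [id] at hij
    rw [if_neg (by omega : ¬ i = j)]

open Matrix

namespace LieT

variable {n : ℕ} {R : Type*} [CommRing R]

abbrev T (n : ℕ) (R : Type*) [CommRing R] := upperTriangularAlgebra n R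

theorem T_zero (x : T n R) {i j : Fin n} (h : j < i) : x.1 i j = 0 := x.2 h

def E (R : Type*) [CommRing R] (i j : Fin n) : T n R :=
  if h : i ≤ j then ⟨Matrix.single i j 1, by
    intro a b hab
    simp only [id] at hab
    rw [Matrix.single_apply, if_neg]
    rintro ⟨rfl, rfl⟩
    exact absurd h (not_le.mpr hab)⟩ else 0

theorem E_coe {i j : Fin n} (h : i ≤ j) : (E R i j).1 = Matrix.single i j (1 : R) := by
  simp [E, h]

theorem expand (x : T n R) : x = ∑ i, ∑ j, x.1 i j • E R i j := by
  apply Subtype.ext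
  conv_lhs => rw [Matrix.matrix_eq_sum_single x.1]
  simp only [AddSubmonoidClass.coe_finsetSum, SetLike.val_smul]
  refine Finset.sum_congr rfl fun i _ => Finset.sum_congr rfl fun j _ => ?_
  by_cases h : i ≤ j
  · rw [E_coe h, Matrix.smul_single]; simp
  · rw [T_zero x (not_le.mp h)]; simp

theorem E_ind (p : T n R → Prop) (h0 : p 0) (ha : ∀ x y, p x → p y → p (x + y))
    (hE : ∀ (r : R) (i j : Fin n), i ≤ j → p (r • E R i j)) (x : T n R) : p x := by
  rw [expand x]
  refine Finset.sum_induction _ p ha h0 fun i _ => Finset.sum_induction _ p ha h0 fun j _ => ?_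
  by_cases h : i ≤ j
  · exact hE _ i j h
  · rw [T_zero x (not_le.mp h), zero_smul]; exact h0

theorem E_mul {i j k : Fin n} (h : i ≤ j) (h' : j ≤ k) : E R i j * E R j k = E R i k := by
  apply Subtype.ext
  rw [MulMemClass.coe_mul, E_coe h, E_coe h', E_coe (h.trans h'), Matrix.single_mul_single_same,
    one_mul]

theorem E_mul_ne {i j k q : Fin n} (h : i ≤ j) (h' : k ≤ q) (hne : j ≠ k) :
    E R i j * E R k q = 0 := by
  apply Subtype.ext
  rw [MulMemClass.coe_mul, E_coe h, E_coe h', Matrix.single_mul_single_of_ne _ _ _ _ hne]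
  rfl

/-- entries below the `k`-th superdiagonal vanish -/
def D (k : ℕ) (x : T n R) : Prop := ∀ i j : Fin n, j.1 < i.1 + k → x.1 i j = 0

theorem D_zero (x : T n R) : D 0 x := fun _ _ h => T_zero x (by simpa using h)

theorem D_mul {a b : ℕ} {x y : T n R} (hx : D a x) (hy : D b y) : D (a + b) (x * y) := by
  intro i j h
  rw [MulMemClass.coe_mul, Matrix.mul_apply]
  refine Finset.sum_eq_zero fun k _ => ?_
  by_cases hk : k.1 < i.1 + a
  · rw [hx i k hk, zero_mul]
  · rw [hy k j (by omega), mul_zero]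

theorem D_sub {a : ℕ} {x y : T n R} (hx : D a x) (hy : D a y) : D a (x - y) := by
  intro i j h
  rw [AddSubgroupClass.coe_sub, Matrix.sub_apply, hx i j h, hy i j h, sub_zero]

theorem D_E {k : ℕ} {i j : Fin n} (h : i.1 + k ≤ j.1) : D k (E R i j) := by
  intro a b hab
  rw [E_coe (Fin.le_def.mpr (by omega)), Matrix.single_apply, if_neg]
  rintro ⟨rfl, rfl⟩
  omega

theorem mul_diag (x y : T n R) (i : Fin n) : (x * y).1 i i = x.1 i i * y.1 i i := by
  rw [MulMemClass.coe_mul, Matrix.mul_apply]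
  refine Finset.sum_eq_single i (fun k _ hk => ?_) (by simp)
  rcases lt_or_gt_of_ne hk with h | h
  · rw [T_zero x h, zero_mul]
  · rw [T_zero y h, mul_zero]

theorem D_comm (x y : T n R) : D 1 (x * y - y * x) := by
  intro i j h
  by_cases hij : i = j
  · subst hij
    rw [AddSubgroupClass.coe_sub, Matrix.sub_apply, mul_diag, mul_diag]; ring
  · exact T_zero _ (Fin.lt_def.mpr (by have := Fin.val_ne_of_ne hij; omega))

theorem D_lin (l : T n R →ₗ[R] T n R) {k k' : ℕ}
    (h : ∀ i j : Fin n, i.1 + k ≤ j.1 → D k' (l (E R i j))) {x : T n R} (hx : D k x) :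
    D k' (l x) := by
  have h0 : D k' (0 : T n R) := fun _ _ _ => rfl
  have ha : ∀ x y : T n R, D k' x → D k' y → D k' (x + y) := by
    intro x y hx hy i j h
    rw [AddMemClass.coe_add, Matrix.add_apply, hx i j h, hy i j h, add_zero]
  rw [expand x]
  simp only [map_sum, map_smul]
  refine Finset.sum_induction _ _ ha h0 fun i _ => Finset.sum_induction _ _ ha h0 fun j _ => ?_
  by_cases hij : i.1 + k ≤ j.1
  · intro a b hab
    rw [SetLike.val_smul, Matrix.smul_apply, h i j hij a b hab, smul_zero]
  · rw [hx i j (by omega), zero_smul]; exact h0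

theorem l_D (l : T n R →ₗ[R] T n R)
    (hLie : ∀ x y, l (x * y - y * x) = l x * l y - l y * l x) (k : ℕ) {x : T n R}
    (hx : D (k + 1) x) : D (k + 1) (l x) := by
  induction k generalizing x with
  | zero =>
    refine D_lin l (fun i j hij => ?_) hx
    have : E R i j = E R i i * E R i j - E R i j * E R i i := by
      rw [E_mul le_rfl (Fin.le_def.mpr (by omega)),
        E_mul_ne (Fin.le_def.mpr (by omega)) le_rfl (Fin.ne_of_val_ne (by omega)), sub_zero]
    rw [this, hLie]
    exact D_comm _ _
  | succ k ih =>
    refine D_lin l (fun i j hij => ?_) hx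
    have hj := j.2
    let p : Fin n := ⟨i.1 + 1, by omega⟩
    have h1 : i.1 + 1 ≤ p.1 := le_rfl
    have h2 : p.1 + (k + 1) ≤ j.1 := by change i.1 + 1 + (k + 1) ≤ j.1; omega
    have : E R i j = E R i p * E R p j - E R p j * E R i p := by
      rw [E_mul (Fin.le_def.mpr (by omega)) (Fin.le_def.mpr (by omega)),
        E_mul_ne (Fin.le_def.mpr (by omega)) (Fin.le_def.mpr (by omega))
        (Fin.ne_of_val_ne (by omega)), sub_zero]
    rw [this, hLie]
    have a1 : D 1 (l (E R i p)) := by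
      refine D_lin l (k := 1) (fun i j hij => ?_) (D_E h1)
      have : E R i j = E R i i * E R i j - E R i j * E R i i := by
        rw [E_mul le_rfl (Fin.le_def.mpr (by omega)),
          E_mul_ne (Fin.le_def.mpr (by omega)) le_rfl (Fin.ne_of_val_ne (by omega)), sub_zero]
      rw [this, hLie]
      exact D_comm _ _
    have a2 := ih (D_E (R := R) h2)
    refine D_sub ?_ (D_mul a2 a1)
    have := D_mul a1 a2
    rwa [add_comm] at this

/-- idempotent with zero diagonal vanishes -/
theorem idem_zero (h : T n R) (hh : h * h = h) (hd : ∀ i, h.1 i i = 0) : h = 0 := by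
  have h1 : D 1 h := by
    intro i j hij
    by_cases e : i = j
    · subst e; exact hd i
    · exact T_zero _ (Fin.lt_def.mpr (by have := Fin.val_ne_of_ne e; omega))
  have hk : ∀ k, D k h := by
    intro k
    induction k with
    | zero => exact D_zero h
    | succ k ih => have := D_mul ih h1; rwa [hh] at this
  apply Subtype.ext
  ext i j
  exact hk n i j (by omega)

theorem comm_diag (x y : T n R) (i : Fin n) : (x * y - y * x).1 i i = 0 :=
  D_comm x y i i (by omega)

theorem idem_of (F : T n R) (k : ℕ) (hF : ∀ i, F.1 i i = if i.1 < k then 1 else 0)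
    (h : ∀ x : T n R, F * (F * x - x * F) - (F * x - x * F) * F = F * x - x * F) :
    F * F = F := by
  apply Subtype.ext
  ext i j
  rcases lt_trichotomy i j with hij | rfl | hij
  · by_cases hi : i.1 < k
    · have := congrArg (fun y : T n R => y.1 i j) (h (E R i i))
      simp only [AddSubgroupClass.coe_sub, MulMemClass.coe_mul, E_coe le_rfl, mul_sub, sub_mul,
        Matrix.sub_apply, ← mul_assoc] at this
      rw [Matrix.mul_assoc _ F.1 F.1] at this
      simp only [Matrix.mul_single_apply_of_ne _ _ _ _ _ hij.ne',
        Matrix.single_mul_apply_same] at this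
      have e : (F.1 * Matrix.single i i (1 : R) * F.1 : Matrix (Fin n) (Fin n) R) i j = F.1 i j := by
        rw [Matrix.mul_assoc, Matrix.mul_apply, Finset.sum_eq_single i]
        · simp [hF, hi]
        · intro b _ hb; rw [Matrix.single_mul_apply_of_ne _ _ _ _ _ hb, mul_zero]
        · simp
      rw [e] at this
      rw [MulMemClass.coe_mul]
      linear_combination this
    · have hj : ¬ j.1 < k := by have := Fin.lt_def.mp hij; omega
      have := congrArg (fun y : T n R => y.1 i j) (h (E R j j))
      simp only [AddSubgroupClass.coe_sub, MulMemClass.coe_mul, E_coe le_rfl, mul_sub, sub_mul,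
        Matrix.sub_apply, ← mul_assoc] at this
      rw [Matrix.mul_assoc _ F.1 F.1] at this
      simp only [Matrix.single_mul_apply_of_ne _ _ _ _ _ hij.ne,
        Matrix.mul_single_apply_same] at this
      have e : (F.1 * Matrix.single j j (1 : R) * F.1 : Matrix (Fin n) (Fin n) R) i j = 0 := by
        rw [Matrix.mul_assoc, Matrix.mul_apply]
        refine Finset.sum_eq_zero fun b _ => ?_
        by_cases hb : b = j
        · subst hb; simp [hF, hj]
        · rw [Matrix.single_mul_apply_of_ne _ _ _ _ _ hb, mul_zero]
      rw [e] at this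
      rw [MulMemClass.coe_mul]
      linear_combination this
  · rw [mul_diag, hF]; split_ifs <;> simp
  · rw [T_zero _ hij, T_zero _ hij]

def s (R : Type*) [CommRing R] (n k : ℕ) : T n R :=
  ⟨Matrix.diagonal fun i : Fin n => if i.1 < k then (1 : R) else 0, by
    intro i j h
    exact Matrix.diagonal_apply_ne _ (by rintro rfl; exact lt_irrefl _ h)⟩

theorem s_diag (k : ℕ) (i : Fin n) : (s R n k).1 i i = if i.1 < k then 1 else 0 := by
  simp [s]

theorem s_ad (k : ℕ) (x : T n R) (i j : Fin n) : (s R n k * x - x * s R n k).1 i j =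
    ((if i.1 < k then 1 else 0) - (if j.1 < k then 1 else 0)) * x.1 i j := by
  rw [AddSubgroupClass.coe_sub, MulMemClass.coe_mul, MulMemClass.coe_mul]
  simp only [s, Matrix.sub_apply, Matrix.diagonal_mul, Matrix.mul_diagonal]
  ring

theorem s_ad2 (k : ℕ) (x : T n R) : s R n k * (s R n k * x - x * s R n k) -
    (s R n k * x - x * s R n k) * s R n k = s R n k * x - x * s R n k := by
  apply Subtype.ext
  ext i j
  rw [s_ad, s_ad]
  rcases lt_or_ge j i with h | h
  · rw [T_zero x h]; ring
  · have := Fin.le_def.mp h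
    split_ifs <;> first | omega | ring

theorem s_comm (a b : ℕ) : s R n a * s R n b - s R n b * s R n a = 0 := by
  apply Subtype.ext
  ext i j
  rw [s_ad]
  by_cases h : i = j
  · subst h; simp
  · simp [s, Matrix.diagonal_apply_ne _ h]

theorem s_E (i : Fin n) : E R i i = s R n (i.1 + 1) - s R n i.1 := by
  apply Subtype.ext
  rw [E_coe le_rfl, AddSubgroupClass.coe_sub]
  ext a b
  simp only [s, Matrix.sub_apply, Matrix.diagonal_apply, Matrix.single_apply]
  by_cases hab : a = b
  · subst hab
    by_cases hia : i = a
    · subst hia; simp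
    · have := Fin.val_ne_of_ne hia
      simp only [hia, if_true, false_and, if_false]
      split_ifs <;> first | omega | simp
  · simp only [hab, if_false]
    rw [if_neg, sub_zero]
    rintro ⟨rfl, rfl⟩; exact hab rfl

theorem s_n : s R n n = 1 := by
  apply Subtype.ext
  ext a b
  simp [s, Matrix.diagonal_apply, Matrix.one_apply]

section core

variable [IsDomain R] [Invertible (2 : R)]

/-- A Lie endomorphism preserving the diagonal is multiplicative. -/
theorem mult_of_diag (m : T n R →ₗ[R] T n R)
    (hLie : ∀ x y, m (x * y - y * x) = m x * m y - m y * m x)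
    (hd : ∀ x i, (m x).1 i i = x.1 i i)
    (hsurj : ∀ y, ∃ x, ∃ r : R, y = m x + r • 1) :
    (∀ x y, m (x * y) = m x * m y) ∧ m 1 = 1 := by
  have hFd : ∀ k i, (m (s R n k)).1 i i = if i.1 < k then 1 else 0 := by
    intro k i; rw [hd, s_diag]
  have hFi : ∀ k, m (s R n k) * m (s R n k) = m (s R n k) := by
    intro k
    refine idem_of _ k (hFd k) fun y => ?_
    obtain ⟨x, r, rfl⟩ := hsurj y
    have e : m (s R n k) * (m x + r • 1) - (m x + r • 1) * m (s R n k) =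
        m (s R n k) * m x - m x * m (s R n k) := by
      simp only [add_mul, mul_add, smul_mul_assoc, mul_smul_comm, one_mul, mul_one]
      abel
    rw [e, ← hLie, ← hLie, s_ad2]
  have hFc : ∀ a b, m (s R n a) * m (s R n b) = m (s R n b) * m (s R n a) := by
    intro a b
    rw [← sub_eq_zero, ← hLie, s_comm, map_zero]
  have hF1 : ∀ a b, a ≤ b → m (s R n a) * m (s R n b) = m (s R n a) := by
    intro a b hab
    have : m (s R n a) - m (s R n a) * m (s R n b) = 0 := by
      apply idem_zero
      · generalize hA : m (s R n a) = A
        generalize hB : m (s R n b) = B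
        have ha : A * A = A := by rw [← hA]; exact hFi a
        have hb : B * B = B := by rw [← hB]; exact hFi b
        have hc : B * A = A * B := by rw [← hA, ← hB]; exact hFc b a
        have e1 : A * B * A = A * B := by rw [mul_assoc, hc, ← mul_assoc, ha]
        have e2 : A * (A * B) = A * B := by rw [← mul_assoc, ha]
        have e3 : A * B * (A * B) = A * B := by rw [← mul_assoc, e1, mul_assoc, hb]
        rw [sub_mul, mul_sub, mul_sub, ha, e1, e2, e3]; abel
      · intro i
        rw [AddSubgroupClass.coe_sub, Matrix.sub_apply, mul_diag, hFd, hFd]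
        split_ifs <;> first | omega | simp
    exact (sub_eq_zero.mp this).symm
  have hF2 : ∀ a b, a ≤ b → m (s R n b) * m (s R n a) = m (s R n a) := by
    intro a b hab; rw [hFc, hF1 a b hab]
  have hfi : ∀ i : Fin n, m (E R i i) * m (E R i i) = m (E R i i) := by
    intro i
    rw [s_E, map_sub, sub_mul, mul_sub, mul_sub, hFi, hFi, hF1 _ _ (Nat.le_succ _),
      hF2 _ _ (Nat.le_succ _)]
    abel
  have hfo : ∀ i j : Fin n, i ≠ j → m (E R i i) * m (E R j j) = 0 := by
    intro i j hij
    have := Fin.val_ne_of_ne hij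
    rw [s_E, s_E, map_sub, map_sub, sub_mul, mul_sub, mul_sub]
    rcases lt_or_gt_of_ne this with h | h
    · rw [hF1 _ _ (by omega), hF1 _ _ (by omega), hF1 _ _ (by omega), hF1 _ _ (by omega)]
      abel
    · rw [hF2 _ _ (by omega), hF2 _ _ (by omega), hF2 _ _ (by omega), hF2 _ _ (by omega)]
      abel
  have two : ∀ y : T n R, y + y = 0 → y = 0 := by
    intro y hy
    have h2 : (2 : R) • y = 0 := by rw [two_smul, hy]
    have := congrArg (fun z => (⅟(2 : R)) • z) h2
    simpa [smul_smul] using this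
  have hl : ∀ i j : Fin n, i ≤ j → m (E R i i) * m (E R i j) = m (E R i j) := by
    intro i j hij
    by_cases e : i = j
    · subst e; exact hfi i
    have key := hLie (E R i i) (E R i j)
    rw [E_mul le_rfl hij, E_mul_ne hij le_rfl (Ne.symm e), sub_zero] at key
    have hf := hfi i
    generalize m (E R i i) = f at *
    generalize m (E R i j) = y at *
    have k1 : f * y * f = 0 := by
      have := congrArg (f * ·) key
      simp only [mul_sub, ← mul_assoc, hf] at this
      exact (sub_eq_self.mp this.symm)
    have k2 : y * f = 0 := by
      apply two
      have := congrArg (· * f) key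
      simp only [sub_mul, mul_assoc y, hf] at this
      rw [k1] at this
      nth_rewrite 1 [this]
      abel
    rw [k2, sub_zero] at key
    exact key.symm
  have hr : ∀ i j : Fin n, i ≤ j → m (E R i j) * m (E R j j) = m (E R i j) := by
    intro i j hij
    by_cases e : i = j
    · subst e; exact hfi i
    have key := hLie (E R i j) (E R j j)
    rw [E_mul hij le_rfl, E_mul_ne le_rfl hij (Ne.symm e), sub_zero] at key
    have hf := hfi j
    generalize m (E R j j) = f at *
    generalize m (E R i j) = y at *
    have k1 : f * y * f = 0 := by
      have := congrArg (· * f) key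
      simp only [sub_mul, mul_assoc y, hf] at this
      exact (sub_eq_self.mp this.symm)
    have k2 : f * y = 0 := by
      apply two
      have := congrArg (f * ·) key
      simp only [mul_sub, ← mul_assoc, hf] at this
      rw [k1] at this
      nth_rewrite 1 [this]
      abel
    rw [k2, sub_zero] at key
    exact key.symm
  have h0 : ∀ i j k q : Fin n, i ≤ j → k ≤ q → j ≠ k → m (E R i j) * m (E R k q) = 0 := by
    intro i j k q hij hkq hjk
    rw [← hr i j hij, ← hl k q hkq, mul_assoc, ← mul_assoc (m (E R j j)), hfo j k hjk, zero_mul,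
      mul_zero]
  have hb : ∀ i j k q : Fin n, i ≤ j → k ≤ q →
      m (E R i j * E R k q) = m (E R i j) * m (E R k q) := by
    intro i j k q hij hkq
    by_cases hjk : j = k
    · subst hjk
      by_cases hij' : i = j
      · subst hij'; rw [E_mul le_rfl hkq, hl _ _ hkq]
      have hne : q ≠ i := by
        rintro rfl
        exact hij' (le_antisymm hij hkq)
      have := hLie (E R i j) (E R j q)
      rwa [E_mul_ne hkq hij hne, sub_zero, h0 _ _ _ _ hkq hij hne, sub_zero] at this
    · rw [E_mul_ne hij hkq hjk, h0 _ _ _ _ hij hkq hjk, map_zero]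
  constructor
  · intro x y
    refine E_ind (fun x => m (x * y) = m x * m y) (by simp) ?_ ?_ x
    · intro a b ha hb; simp only [add_mul, map_add, ha, hb]
    · intro r i j hij
      refine E_ind (fun y => m (r • E R i j * y) = m (r • E R i j) * m y) (by simp) ?_ ?_ y
      · intro a b ha hb; simp only [mul_add, map_add, ha, hb]
      · intro r' k q hkq
        simp only [smul_mul_assoc, mul_smul_comm, map_smul, hb i j k q hij hkq]
  · have := idem_zero (1 - m (s R n n)) ?_ ?_
    · rw [s_n] at this
      exact (sub_eq_zero.mp this).symm
    · rw [sub_mul, mul_sub, one_mul, mul_sub, hFi, mul_one, one_mul]; abel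
    · intro i
      rw [AddSubgroupClass.coe_sub, Matrix.sub_apply, hFd]
      simp

theorem one_diag (i : Fin n) : (1 : T n R).1 i i = 1 := by
  change (1 : Matrix (Fin n) (Fin n) R) i i = 1
  simp

theorem core (hn : 0 < n) (l : T n R ≃ₗ[R] T n R)
    (hLie : ∀ x y, l (x * y - y * x) = l x * l y - l y * l x)
    (hd : ∀ x i j, (l x).1 i i - x.1 i i = (l x).1 j j - x.1 j j) :
    ∃ m n₀ : T n R →ₗ[R] T n R,
      (∀ x, l x = m x + n₀ x) ∧
      Function.Bijective m ∧
      (∀ x y, m (x * y) = m x * m y) ∧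
      (∀ x, ∃ r : R, n₀ x = algebraMap R (T n R) r) ∧
      (∀ x y, n₀ (x * y - y * x) = 0) := by
  let z : Fin n := ⟨0, hn⟩
  let c : T n R →ₗ[R] R :=
    { toFun := fun x => (l x).1 z z - x.1 z z
      map_add' := by intro x y; simp; ring
      map_smul' := by intro r x; simp; ring }
  have hc : ∀ x i, c x = (l x).1 i i - x.1 i i := fun x i => hd x z i
  let n₀ : T n R →ₗ[R] T n R := c.smulRight 1
  let m : T n R →ₗ[R] T n R := l.toLinearMap - n₀
  have hn0 : ∀ x, n₀ x = c x • 1 := fun x => rfl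
  have hm : ∀ x, m x = l x - c x • 1 := fun x => rfl
  have hcc : ∀ x y, c (x * y - y * x) = 0 := by
    intro x y
    rw [hc _ z, hLie, comm_diag, comm_diag, sub_zero]
  have hmL : ∀ x y, m (x * y - y * x) = m x * m y - m y * m x := by
    intro x y
    rw [hm, hcc, zero_smul, sub_zero, hLie, hm, hm]
    simp only [sub_mul, mul_sub, smul_mul_assoc, mul_smul_comm, one_mul, mul_one, smul_sub]
    rw [smul_comm (c x) (c y)]
    abel
  have hmd : ∀ x i, (m x).1 i i = x.1 i i := by
    intro x i
    rw [hm, AddSubgroupClass.coe_sub, Matrix.sub_apply, SetLike.val_smul, Matrix.smul_apply,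
      one_diag, hc x i]
    simp
  have hal : ∀ r : R, algebraMap R (T n R) r = r • 1 := fun r => Algebra.algebraMap_eq_smul_one r
  obtain ⟨hmul, hone⟩ := mult_of_diag m hmL hmd (by
    intro y
    refine ⟨l.symm y, c (l.symm y), ?_⟩
    rw [hm, LinearEquiv.apply_symm_apply]; abel)
  refine ⟨m, n₀, ?_, ⟨?_, ?_⟩, hmul, fun x => ⟨c x, by rw [hn0, hal]⟩, ?_⟩
  · intro x; rw [hm, hn0]; abel
  · rw [injective_iff_map_eq_zero]
    intro x hx
    have h1 : l 1 = (1 + c 1) • (1 : T n R) := by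
      have := hm 1
      rw [hone, eq_sub_iff_add_eq] at this
      rw [← this, add_smul, one_smul]
    have h2 : l x = c x • 1 := by
      have := hm x
      rw [hx] at this
      exact (sub_eq_zero.mp this.symm)
    have h3 : (1 + c 1) • x = c x • 1 := by
      apply l.injective
      rw [map_smul, map_smul, h1, h2, smul_comm]
    have h4 : x.1 z z = 0 := by
      rw [← hmd, hx]; rfl
    have h5 : c x = 0 := by
      have := congrArg (fun y : T n R => y.1 z z) h3
      simp only [SetLike.val_smul, Matrix.smul_apply, h4, one_diag] at this
      simpa using this.symm
    rw [h5, zero_smul] at h2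
    exact (map_eq_zero_iff l l.injective).mp h2
  · intro y
    refine ⟨l.symm y + c (l.symm y) • 1, ?_⟩
    rw [map_add, map_smul, hone, hm, LinearEquiv.apply_symm_apply]; abel
  · intro x y; rw [hn0, hcc, zero_smul]

end core

theorem path (N : ℕ) (f : ℕ → ℕ) (hlt : ∀ j, j < N → f j < N)
    (hinj : ∀ j k, j < N → k < N → f j = f k → j = k)
    (hadj : ∀ j, j + 1 < N → f (j + 1) = f j + 1 ∨ f j = f (j + 1) + 1) :
    (∀ j, j < N → f j = j) ∨ (∀ j, j < N → f j = N - 1 - j) := by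
  by_cases hN : N ≤ 1
  · left
    intro j hj
    have := hlt j hj
    omega
  have hst : ∀ j, j + 2 < N → f (j + 2) ≠ f j := fun j hj h => by
    have := hinj _ _ hj (by omega) h
    omega
  rcases hadj 0 (by omega) with h0 | h0
  · left
    have key : ∀ j, j + 1 < N → f (j + 1) = f j + 1 := by
      intro j
      induction j with
      | zero => intro _; exact h0
      | succ j ih =>
        intro hj
        have h1 := ih (by omega)
        have h2 := hst j (by omega)
        have h3 := hadj (j + 1) (by omega)
        rw [show j + 1 + 1 = j + 2 by ring] at *
        omega
    have key2 : ∀ j, j < N → f j = f 0 + j := by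
      intro j
      induction j with
      | zero => intro _; rfl
      | succ j ih => intro hj; rw [key j hj, ih (by omega)]; ring
    have := key2 (N - 1) (by omega)
    have := hlt (N - 1) (by omega)
    intro j hj
    have := key2 j hj
    omega
  · right
    have key : ∀ j, j + 1 < N → f j = f (j + 1) + 1 := by
      intro j
      induction j with
      | zero => intro _; exact h0
      | succ j ih =>
        intro hj
        have h1 := ih (by omega)
        have h2 := hst j (by omega)
        have h3 := hadj (j + 1) (by omega)
        rw [show j + 1 + 1 = j + 2 by ring] at *
        omega
    have key2 : ∀ j, j < N → f 0 = f j + j := by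
      intro j
      induction j with
      | zero => intro _; rfl
      | succ j ih =>
        intro hj
        have := key j hj
        have := ih (by omega)
        omega
    have := key2 (N - 1) (by omega)
    have := hlt 0 (by omega)
    intro j hj
    have := key2 j hj
    omega

theorem prod_entry {a b : ℕ} {x y : T n R} (hx : D a x) (hy : D b y) (i k j : Fin n)
    (h1 : i.1 + a = k.1) (h2 : k.1 + b = j.1) : (x * y).1 i j = x.1 i k * y.1 k j := by
  rw [MulMemClass.coe_mul, Matrix.mul_apply]
  refine Finset.sum_eq_single k (fun q _ hq => ?_) (by simp)
  have := Fin.val_ne_of_ne hq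
  by_cases h : q.1 < i.1 + a
  · rw [hx _ _ h, zero_mul]
  · rw [hy q j (by omega), mul_zero]

theorem D_succ {k : ℕ} {x : T n R} (hx : D k x)
    (h : ∀ i j : Fin n, i.1 + k = j.1 → x.1 i j = 0) : D (k + 1) x := by
  intro i j hij
  rcases Nat.lt_or_ge j.1 (i.1 + k) with h' | h'
  · exact hx i j h'
  · exact h i j (by omega)

/-- simple roots -/
def al (x : T n R) (i : ℕ) (h : i + 1 < n) : R :=
  x.1 ⟨i, by omega⟩ ⟨i, by omega⟩ - x.1 ⟨i + 1, h⟩ ⟨i + 1, h⟩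

def sE (R : Type*) [CommRing R] (i : ℕ) (h : i + 1 < n) : T n R :=
  E R ⟨i, by omega⟩ ⟨i + 1, h⟩

theorem al_s (i k : ℕ) (h : i + 1 < n) :
    al (s R n (k + 1)) i h = if i = k then 1 else 0 := by
  rw [al, s_diag, s_diag]
  simp only
  split_ifs <;> first | omega | simp

theorem sE_D (i : ℕ) (h : i + 1 < n) : D 1 (sE R i h) := D_E (by simp)

theorem comm_entry {x y : T n R} (hy : D 1 y) (i : ℕ) (h : i + 1 < n) :
    (x * y - y * x).1 ⟨i, by omega⟩ ⟨i + 1, h⟩ = al x i h * y.1 ⟨i, by omega⟩ ⟨i + 1, h⟩ := by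
  rw [AddSubgroupClass.coe_sub, Matrix.sub_apply,
    prod_entry (D_zero x) hy ⟨i, by omega⟩ ⟨i, by omega⟩ ⟨i + 1, h⟩ rfl rfl,
    prod_entry hy (D_zero x) ⟨i, by omega⟩ ⟨i + 1, h⟩ ⟨i + 1, h⟩ rfl rfl, al]
  ring

section roots

variable [IsDomain R] (l : T n R ≃ₗ[R] T n R)
    (hLie : ∀ x y, l (x * y - y * x) = l x * l y - l y * l x)

include hLie

theorem symm_lie (x y : T n R) :
    l.symm (x * y - y * x) = l.symm x * l.symm y - l.symm y * l.symm x := by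
  apply l.injective
  rw [hLie]; simp

theorem D_iff (k : ℕ) (x : T n R) : D (k + 1) (l x) ↔ D (k + 1) x := by
  constructor
  · intro h
    have := l_D l.symm.toLinearMap (symm_lie l hLie) k h
    simpa using this
  · exact l_D l.toLinearMap hLie k

theorem root_eq (i j : ℕ) (hi : i + 1 < n) (hj : j + 1 < n)
    (hP : (l (sE R j hj)).1 ⟨i, by omega⟩ ⟨i + 1, hi⟩ ≠ 0) (x : T n R) :
    al (l x) i hi = al x j hj := by
  have h2 : D 2 (x * sE R j hj - sE R j hj * x - al x j hj • sE R j hj) := by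
    refine D_succ (D_sub (D_comm _ _) ?_) ?_
    · intro a b hab
      rw [SetLike.val_smul, Matrix.smul_apply, sE_D j hj a b hab, smul_zero]
    · rintro ⟨a, ha⟩ ⟨b, hb⟩ hab
      simp only at hab
      subst hab
      rw [AddSubgroupClass.coe_sub, Matrix.sub_apply, comm_entry (sE_D j hj) a hb,
        SetLike.val_smul, Matrix.smul_apply]
      by_cases e : a = j
      · subst e; simp
      · have : (sE R j hj).1 ⟨a, ha⟩ ⟨a + 1, hb⟩ = 0 := by
          rw [sE, E_coe (by simp [Fin.le_def]), Matrix.single_apply, if_neg]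
          simp only [Fin.mk.injEq]; omega
        rw [this]; simp
  have h3 := (D_iff l hLie 1 _).mpr h2 ⟨i, by omega⟩ ⟨i + 1, hi⟩ (by simp)
  rw [map_sub, hLie, map_smul, AddSubgroupClass.coe_sub, Matrix.sub_apply,
    comm_entry ((D_iff l hLie 0 _).mpr (sE_D j hj)), SetLike.val_smul, Matrix.smul_apply,
    smul_eq_mul, ← sub_mul] at h3
  exact sub_eq_zero.mp ((mul_eq_zero.mp h3).resolve_right hP)

theorem exists_root (j : ℕ) (hj : j + 1 < n) : ∃ (i : ℕ) (hi : i + 1 < n),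
    (l (sE R j hj)).1 ⟨i, by omega⟩ ⟨i + 1, hi⟩ ≠ 0 := by
  by_contra! hc
  have h2 : D 2 (l (sE R j hj)) := by
    refine D_succ ((D_iff l hLie 0 _).mpr (sE_D j hj)) ?_
    rintro ⟨a, ha⟩ ⟨b, hb⟩ hab
    simp only at hab
    subst hab
    exact hc a hb
  have h3 := (D_iff l hLie 1 _).mp h2 ⟨j, by omega⟩ ⟨j + 1, hj⟩ (by simp)
  rw [sE, E_coe (by simp [Fin.le_def]), Matrix.single_apply_same] at h3
  exact one_ne_zero h3

theorem root_perm : (∀ x i hi, al (l x) i hi = al x i hi) ∨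
    (∀ x i hi, al (l x) i hi = al x (n - 2 - i) (by omega)) := by
  have ex : ∀ j, ∃ i, ∀ hj : j + 1 < n, ∃ hi : i + 1 < n,
      (l (sE R j hj)).1 ⟨i, by omega⟩ ⟨i + 1, hi⟩ ≠ 0 := by
    intro j
    by_cases hj : j + 1 < n
    · obtain ⟨i, hi, h⟩ := exists_root l hLie j hj
      exact ⟨i, fun _ => ⟨hi, h⟩⟩
    · exact ⟨0, fun h => absurd h hj⟩
  choose f hf using ex
  have hfr : ∀ j (hj : j + 1 < n) (hi : f j + 1 < n) x, al (l x) (f j) hi = al x j hj := by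
    intro j hj hi x
    exact root_eq l hLie _ _ hi hj (hf j hj).2 x
  have huniq : ∀ j (hj : j + 1 < n) i (hi : i + 1 < n),
      (l (sE R j hj)).1 ⟨i, by omega⟩ ⟨i + 1, hi⟩ ≠ 0 → i = f j := by
    intro j hj i hi hP
    have h1 := root_eq l hLie _ _ hi hj hP (l.symm (s R n (f j + 1)))
    rw [← hfr j hj (hf j hj).1, LinearEquiv.apply_symm_apply, al_s, al_s, if_pos rfl] at h1
    by_contra h
    rw [if_neg h] at h1
    exact zero_ne_one h1
  have hp := path (n - 1) f (fun j hj => by have := (hf j (by omega)).1; omega) ?_ ?_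
  · rcases hp with hp | hp
    · left
      intro x i hi
      have h := hfr i hi (hf i hi).1 x
      simpa only [hp i (by omega)] using h
    · right
      intro x i hi
      have hj : n - 2 - i + 1 < n := by omega
      have h := hfr (n - 2 - i) hj (hf _ hj).1 x
      have e : f (n - 2 - i) = i := by rw [hp _ (by omega)]; omega
      simpa only [e] using h
  · intro j k hj hk hjk
    have hj' : j + 1 < n := by omega
    have hk' : k + 1 < n := by omega
    have h1 := hfr j hj' (hf j hj').1 (s R n (j + 1))
    have h2 := hfr k hk' (hf k hk').1 (s R n (j + 1))
    simp only [hjk] at h1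
    rw [h2, al_s, al_s, if_pos rfl] at h1
    by_contra h
    rw [if_neg (Ne.symm h)] at h1
    exact zero_ne_one h1
  · intro j hj
    have hj1 : j + 1 < n := by omega
    have hj2 : j + 1 + 1 < n := by omega
    have hE : E R ⟨j, by omega⟩ ⟨j + 1 + 1, hj2⟩ =
        sE R j hj1 * sE R (j + 1) hj2 - sE R (j + 1) hj2 * sE R j hj1 := by
      rw [sE, sE, E_mul (by simp [Fin.le_def]) (by simp [Fin.le_def]),
        E_mul_ne (by simp [Fin.le_def]) (by simp [Fin.le_def]) (by simp; omega), sub_zero]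
    have h3 : ¬ D 3 (l (E R ⟨j, by omega⟩ ⟨j + 1 + 1, hj2⟩)) := by
      rw [D_iff l hLie 2]
      intro h
      have := h ⟨j, by omega⟩ ⟨j + 1 + 1, hj2⟩ (by simp)
      rw [E_coe (by simp [Fin.le_def]; omega), Matrix.single_apply_same] at this
      exact one_ne_zero this
    have hA := (D_iff l hLie 0 _).mpr (sE_D (R := R) j hj1)
    have hB := (D_iff l hLie 0 _).mpr (sE_D (R := R) (j + 1) hj2)
    by_contra hcon
    apply h3
    refine D_succ ((D_iff l hLie 1 _).mpr (D_E (by simp [add_assoc]))) ?_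
    rintro ⟨a, ha⟩ ⟨b, hb⟩ hab
    simp only at hab
    obtain rfl : b = a + 1 + 1 := by omega
    rw [hE, hLie, AddSubgroupClass.coe_sub, Matrix.sub_apply,
      prod_entry hA hB ⟨a, ha⟩ ⟨a + 1, by omega⟩ ⟨a + 1 + 1, hb⟩ rfl rfl,
      prod_entry hB hA ⟨a, ha⟩ ⟨a + 1, by omega⟩ ⟨a + 1 + 1, hb⟩ rfl rfl]
    have u1 := huniq j hj1 a (by omega)
    have u2 := huniq j hj1 (a + 1) hb
    have u3 := huniq (j + 1) hj2 a (by omega)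
    have u4 := huniq (j + 1) hj2 (a + 1) hb
    have z1 : (l (sE R j hj1)).1 ⟨a, ha⟩ ⟨a + 1, by omega⟩ *
        (l (sE R (j + 1) hj2)).1 ⟨a + 1, by omega⟩ ⟨a + 1 + 1, hb⟩ = 0 := by
      by_contra h
      have := u1 (left_ne_zero_of_mul h)
      have := u4 (right_ne_zero_of_mul h)
      omega
    have z2 : (l (sE R (j + 1) hj2)).1 ⟨a, ha⟩ ⟨a + 1, by omega⟩ *
        (l (sE R j hj1)).1 ⟨a + 1, by omega⟩ ⟨a + 1 + 1, hb⟩ = 0 := by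
      by_contra h
      have := u3 (left_ne_zero_of_mul h)
      have := u2 (right_ne_zero_of_mul h)
      omega
    rw [z1, z2, sub_zero]

end roots

/-- minus the flip along the antidiagonal -/
def tau (n : ℕ) (R : Type*) [CommRing R] : T n R ≃ₗ[R] T n R where
  toFun x := ⟨fun i j => -x.1 j.rev i.rev, by
    intro i j h
    simp only [id] at h
    change -x.1 j.rev i.rev = 0
    rw [T_zero x (Fin.rev_lt_rev.mpr h), neg_zero]⟩
  invFun x := ⟨fun i j => -x.1 j.rev i.rev, by
    intro i j h
    simp only [id] at h
    change -x.1 j.rev i.rev = 0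
    rw [T_zero x (Fin.rev_lt_rev.mpr h), neg_zero]⟩
  map_add' x y := by
    apply Subtype.ext; ext i j
    exact neg_add (x.1 j.rev i.rev) (y.1 j.rev i.rev)
  map_smul' r x := by
    apply Subtype.ext; ext i j
    exact (mul_neg r (x.1 j.rev i.rev)).symm
  left_inv x := by
    apply Subtype.ext; ext i j; simp
  right_inv x := by
    apply Subtype.ext; ext i j; simp

theorem tau_apply (x : T n R) (i j : Fin n) : (tau n R x).1 i j = -x.1 j.rev i.rev := rfl

theorem tau_tau (x : T n R) : tau n R (tau n R x) = x := by
  apply Subtype.ext; ext i j; simp [tau_apply]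

theorem tau_mul (x y : T n R) : tau n R (x * y) = -(tau n R y * tau n R x) := by
  apply Subtype.ext; ext i j
  rw [tau_apply, NegMemClass.coe_neg, Matrix.neg_apply, MulMemClass.coe_mul, MulMemClass.coe_mul,
    Matrix.mul_apply, Matrix.mul_apply, ← Equiv.sum_comp Fin.revPerm]
  congr 1
  refine Finset.sum_congr rfl fun k _ => ?_
  rw [tau_apply, tau_apply, Fin.revPerm_apply, neg_mul_neg, mul_comm]

theorem tau_alg (r : R) : tau n R (algebraMap R (T n R) r) = algebraMap R (T n R) (-r) := by
  apply Subtype.ext; ext i j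
  rw [tau_apply]
  change -(algebraMap R (Matrix (Fin n) (Fin n) R) r) j.rev i.rev =
    (algebraMap R (Matrix (Fin n) (Fin n) R) (-r)) i j
  rw [Matrix.algebraMap_matrix_apply, Matrix.algebraMap_matrix_apply]
  by_cases h : i = j
  · subst h; simp
  · rw [if_neg h, if_neg (fun e => h (Fin.rev_injective e).symm), neg_zero]

theorem diag_of_al (x y : T n R) (h : ∀ i hi, al x i hi = al y i hi) (i j : Fin n) :
    x.1 i i - y.1 i i = x.1 j j - y.1 j j := by
  have hn : 0 < n := by have := i.2; omega
  have key : ∀ k (hk : k < n), x.1 ⟨k, hk⟩ ⟨k, hk⟩ - y.1 ⟨k, hk⟩ ⟨k, hk⟩ =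
      x.1 ⟨0, hn⟩ ⟨0, hn⟩ - y.1 ⟨0, hn⟩ ⟨0, hn⟩ := by
    intro k
    induction k with
    | zero => intro _; rfl
    | succ k ih =>
      intro hk
      rw [← ih (by omega)]
      have := h k hk
      rw [al, al] at this
      linear_combination -this
  exact (key i.1 i.2).trans (key j.1 j.2).symm

theorem al_tau (x : T n R) (i : ℕ) (hi : i + 1 < n) :
    al (tau n R x) i hi = al x (n - 2 - i) (by omega) := by
  have e1 : (⟨i, by omega⟩ : Fin n).rev = ⟨n - 2 - i + 1, by omega⟩ := by
    ext; simp [Fin.val_rev]; omega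
  have e2 : (⟨i + 1, hi⟩ : Fin n).rev = ⟨n - 2 - i, by omega⟩ := by
    ext; simp [Fin.val_rev]; omega
  rw [al, al, tau_apply, tau_apply, e1, e2]
  ring

end LieT

/-- **Corollary 4.5 (Benkovič–Eremita).**  Let `n ≥ 2` and let `R` be a commutative
domain with `1/2 ∈ R`.  If `l : T_n(R) → T_n(R)` is a Lie isomorphism of the algebra
of `n × n` upper triangular matrices over `R`, then `l = m + n₀`, where `m` is an
algebra isomorphism or the negative of an algebra anti-isomorphism and
`n₀ : T_n(R) → R·1` is a linear map vanishing on each commutator. -/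
theorem stmt16 (n : ℕ) (hn : 2 ≤ n) (R : Type*) [CommRing R] [IsDomain R]
    [Invertible (2 : R)]
    (l : upperTriangularAlgebra n R ≃ₗ[R] upperTriangularAlgebra n R)
    (hLie : ∀ x y : upperTriangularAlgebra n R,
      l (x * y - y * x) = l x * l y - l y * l x) :
    ∃ m n₀ : upperTriangularAlgebra n R →ₗ[R] upperTriangularAlgebra n R,
      (∀ x : upperTriangularAlgebra n R, l x = m x + n₀ x) ∧
      Function.Bijective m ∧
      ((∀ x y : upperTriangularAlgebra n R, m (x * y) = m x * m y) ∨
        (∀ x y : upperTriangularAlgebra n R, m (x * y) = -(m y * m x))) ∧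
      (∀ x : upperTriangularAlgebra n R,
        ∃ r : R, n₀ x = algebraMap R (upperTriangularAlgebra n R) r) ∧
      (∀ x y : upperTriangularAlgebra n R, n₀ (x * y - y * x) = 0) := by
  rcases LieT.root_perm l hLie with h | h
  · obtain ⟨m, n₀, h1, h2, h3, h4, h5⟩ := LieT.core (by omega) l hLie
      (fun x i j => LieT.diag_of_al _ _ (h x) i j)
    exact ⟨m, n₀, h1, h2, Or.inl h3, h4, h5⟩
  · obtain ⟨m, n₀, h1, h2, h3, h4, h5⟩ := LieT.core (by omega) (l.trans (LieT.tau n R)) (by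
      intro x y
      simp only [LinearEquiv.trans_apply]
      rw [hLie, map_sub, LieT.tau_mul, LieT.tau_mul]
      abel)
      (fun x i j => LieT.diag_of_al _ _ (fun k hk => by
        rw [LinearEquiv.trans_apply, LieT.al_tau, h]
        congr 1
        omega) i j)
    let τ := (LieT.tau n R).toLinearMap
    refine ⟨τ ∘ₗ m, τ ∘ₗ n₀, ?_, (LieT.tau n R).bijective.comp h2, Or.inr ?_, ?_, ?_⟩
    · intro x
      have := congrArg (LieT.tau n R) (h1 x)
      rw [LinearEquiv.trans_apply, LieT.tau_tau, map_add] at this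
      exact this
    · intro x y
      change LieT.tau n R (m (x * y)) = -(LieT.tau n R (m y) * LieT.tau n R (m x))
      rw [h3, LieT.tau_mul]
    · intro x
      obtain ⟨r, hr⟩ := h4 x
      refine ⟨-r, ?_⟩
      change LieT.tau n R (n₀ x) = _
      rw [hr, LieT.tau_alg]
    · intro x y
      change LieT.tau n R (n₀ _) = _
      rw [h5, map_zero]
end

section
/- Let n ≥ 3 and let R be a commutative domain with 1/2 ∈ R. If l : M_n(R) → M_n(R) is a Lie isomorphism of the full algebra of n×n matrices over R, then l = m + n₀, where m : M_n(R) → M_n(R) is an algebra isomorphism or the negative of an algebra anti-isomorphism, and n₀ : M_n(R) → R·1 is an R-linear map with n₀([x, y]) = 0 for all x, y ∈ M_n(R). -/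
set_option synthInstance.maxHeartbeats 1000000
set_option maxHeartbeats 1000000

set_option linter.unusedSimpArgs false
set_option linter.unusedVariables false
set_option linter.unusedSectionVars false
namespace LieAux
open Matrix

variable {ι R : Type*} [Fintype ι] [DecidableEq ι] [CommRing R]

/-- matrix units -/
abbrev E (R : Type*) [CommRing R] {ι : Type*} [DecidableEq ι] (i j : ι) : Matrix ι ι R := Matrix.single i j (1 : R)

lemma E_mul (i j k l : ι) : E R i j * E R k l = if j = k then E R i l else 0 := by
  split_ifs with h
  · subst h; simp
  · simp [h]

/-- equivariance -/
def Equi (N : Matrix ι ι R →ₗ[R] Matrix ι ι R →ₗ[R] Matrix ι ι R) : Prop :=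
  ∀ x y z, x * N y z - N y z * x = N (x * y - y * x) z + N y (x * z - z * x)

lemma two_cancel [Invertible (2 : R)] {x : Matrix ι ι R} (h : x + x = 0) : x = 0 := by
  have : (⅟2 : R) • ((2 : R) • x) = 0 := by rw [two_smul, h, smul_zero]
  simpa [smul_smul] using this

theorem vanish [Invertible (2 : R)] (N : Matrix ι ι R →ₗ[R] Matrix ι ι R →ₗ[R] Matrix ι ι R)
    (hs : ∀ x y, N x y = N y x) (hN : Equi N) (a b c : ι) (hab : a ≠ b) (hac : a ≠ c) (hbc : b ≠ c)
    (h0 : N (E R a a) (E R a a) = 0) (h1 : N (E R a a) (E R b b) = 0) : N = 0 := by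
  have key : ∀ x y z, N y z = 0 → N (x * y - y * x) z + N y (x * z - z * x) = 0 := by
    intro x y z h; rw [← hN, h]; simp
  have move : ∀ i j k, i ≠ j → i ≠ k → j ≠ k → N (E R i i) (E R j j) = 0 →
      N (E R k k) (E R j j) = 0 := by
    intro i j k hij hik hjk h
    have h2 := key (E R k i) _ _ h
    simp [E_mul, hij, hik, hjk, hij.symm, hik.symm, hjk.symm] at h2
    have h3 := key (E R i k) _ _ h2
    simp [E_mul, hij, hik, hjk, hij.symm, hik.symm, hjk.symm, h] at h3
    exact h3
  have sym : ∀ i j, N (E R i i) (E R j j) = 0 → N (E R j j) (E R i i) = 0 := by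
    intro i j h; rw [hs, h]
  have offd : ∀ i j, i ≠ j → N (E R i i) (E R j j) = 0 := by
    have A : ∀ j, j ≠ a → N (E R a a) (E R j j) = 0 := by
      intro j hj
      by_cases hjb : j = b
      · rw [hjb]; exact h1
      · exact sym _ _ (move b a j hab.symm (Ne.symm hjb) hj.symm (sym _ _ h1))
    intro i j hij
    by_cases hj : j = a
    · subst hj; exact sym _ _ (A i hij)
    by_cases hi : i = a
    · subst hi; exact A j hj
    exact move a j i (Ne.symm hj) (Ne.symm hi) hij.symm (A j hj)
  have dd : ∀ j, N (E R j j) (E R j j) = 0 := by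
    intro j
    by_cases hj : j = a
    · subst hj; exact h0
    have hj' := Ne.symm hj
    have e1 := key (E R a j) _ _ h0
    simp [E_mul, hj, hj'] at e1
    rw [hs (E R a a)] at e1
    have e1' : N (E R a j) (E R a a) = 0 := by
      apply two_cancel; rw [← neg_eq_zero]; rw [← e1]; abel
    have e2 := key (E R j a) _ _ e1'
    have o1 := offd _ _ hj
    have o2 := offd _ _ hj'
    simp [E_mul, hj, hj', h0, o1] at e2
    have e3 := key (E R a j) _ _ o2
    simp [E_mul, hj, hj'] at e3
    rw [hs (E R a a), e1'] at e3
    simp at e3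
    have e4 := key (E R j a) _ _ e3
    simp [E_mul, hj, hj', o2, e2] at e4
    exact e4
  have diag : ∀ i j, N (E R i i) (E R j j) = 0 := by
    intro i j
    by_cases h : i = j
    · subst h; exact dd i
    · exact offd i j h
  have xd : ∀ i j k, N (E R i j) (E R k k) = 0 := by
    intro i j k
    by_cases hij : i = j
    · subst hij; exact diag _ _
    have hji := Ne.symm hij
    by_cases hik : i = k
    · subst hik
      have e1 := key (E R i j) _ _ (dd i)
      simp [E_mul, hij, hji] at e1
      rw [hs (E R i i)] at e1
      apply two_cancel; rw [← neg_eq_zero]; rw [← e1]; abel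
    have hki := Ne.symm hik
    have e1 := key (E R i j) _ _ (diag i k)
    by_cases hjk : j = k
    · subst hjk
      have e1 := key (E R i j) _ _ (dd j)
      simp [E_mul, hij, hji] at e1
      rw [hs (E R j j)] at e1
      exact two_cancel e1
    have hkj := Ne.symm hjk
    simp [E_mul, hij, hji, hik, hki, hjk, hkj] at e1
    exact e1
  have all : ∀ i j k l, N (E R i j) (E R k l) = 0 := by
    intro i j k l
    by_cases hkl : k = l
    · subst hkl; exact xd _ _ _
    have hlk := Ne.symm hkl
    have e1 := key (E R k l) _ _ (xd i j k)
    have z : N (E R k l * E R i j - E R i j * E R k l) (E R k k) = 0 := by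
      rw [E_mul, E_mul]
      split_ifs <;> simp [xd]
    rw [z] at e1
    simp [E_mul, hkl, hlk] at e1
    exact e1
  apply Matrix.ext_linearMap
  intro i j
  ext1
  apply LinearMap.ext
  intro y
  simp only [LinearMap.comp_apply, LinearMap.zero_apply]
  have : N (E R i j) = 0 := by
    apply Matrix.ext_linearMap
    intro k l
    ext1
    simpa using all i j k l
  simpa using LinearMap.congr_fun this y


/-- model bilinear map -/
noncomputable def mdl (α β γ δ : R) : Matrix ι ι R →ₗ[R] Matrix ι ι R →ₗ[R] Matrix ι ι R :=
  LinearMap.mk₂ R (fun x y => α • (x * y + y * x) + β • (x.trace • y + y.trace • x)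
      + (γ * (x * y).trace + δ * (x.trace * y.trace)) • (1 : Matrix ι ι R))
    (by intro x y z; simp only [add_mul, mul_add, trace_add]; module)
    (by intro c x y; simp only [smul_mul_assoc, mul_smul_comm, trace_smul, smul_eq_mul]; module)
    (by intro x y z; simp only [add_mul, mul_add, trace_add]; module)
    (by intro c x y; simp only [smul_mul_assoc, mul_smul_comm, trace_smul, smul_eq_mul]; module)

lemma mdl_apply (α β γ δ : R) (x y : Matrix ι ι R) : mdl α β γ δ x y =
    α • (x * y + y * x) + β • (x.trace • y + y.trace • x)
      + (γ * (x * y).trace + δ * (x.trace * y.trace)) • (1 : Matrix ι ι R) := rfl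

lemma mdl_equi (α β γ δ : R) : Equi (mdl (ι := ι) α β γ δ) := by
  intro x y z
  simp only [mdl_apply]
  have h1 : (x * y - y * x).trace = 0 := by rw [trace_sub, trace_mul_comm, sub_self]
  have h2 : (x * z - z * x).trace = 0 := by rw [trace_sub, trace_mul_comm, sub_self]
  have h3 : (y * (x * z - z * x)).trace = - ((x * y - y * x) * z).trace := by
    have e : (y * z * x).trace = (x * (y * z)).trace := trace_mul_comm _ _
    simp only [mul_sub, sub_mul, trace_sub, ← mul_assoc] at e ⊢
    rw [e]; ring
  rw [h1, h2, h3]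
  simp only [mul_add, add_mul, mul_smul_comm, smul_mul_assoc, mul_one, one_mul, mul_sub, sub_mul,
    ← mul_assoc]
  module

lemma comm_of (P : Matrix ι ι R →ₗ[R] Matrix ι ι R →ₗ[R] Matrix ι ι R) (hP : Equi P)
    (x y z : Matrix ι ι R) (h1 : x * y = y * x) (h2 : x * z = z * x) : Commute x (P y z) := by
  have := hP x y z
  rw [h1, h2] at this
  simp at this
  exact sub_eq_zero.mp this

lemma form1 (P : Matrix ι ι R →ₗ[R] Matrix ι ι R →ₗ[R] Matrix ι ι R) (hP : Equi P)
    (i c : ι) (hic : i ≠ c) : ∃ a b : R, P (E R i i) (E R i i) = a • 1 + b • E R i i := by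
  have hd : ∀ k, Commute (E R k k) (P (E R i i) (E R i i)) := by
    intro k
    have : E R k k * E R i i = E R i i * E R k k := by
      rw [E_mul, E_mul]; by_cases h : k = i
      · subst h; simp
      · simp [h, Ne.symm h]
    exact comm_of P hP _ _ _ this this
  have ho : ∀ k l, k ≠ i → l ≠ i → Commute (E R k l) (P (E R i i) (E R i i)) := by
    intro k l hk hl
    have : E R k l * E R i i = E R i i * E R k l := by
      rw [E_mul, E_mul]; simp [hl, hk.symm]
    exact comm_of P hP _ _ _ this this
  set W := P (E R i i) (E R i i) with hW
  refine ⟨W c c, W i i - W c c, ?_⟩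
  ext p q
  by_cases hpq : p = q
  · subst hpq
    by_cases hp : p = i
    · subst hp; simp
    · simp [Matrix.single, Ne.symm hp, diag_eq_of_commute_single (ho p c hp hic.symm)]
  · have h0 := row_eq_zero_of_commute_single (hd p) (Ne.symm hpq)
    rw [h0]
    have : ¬ (i = p ∧ i = q) := by rintro ⟨rfl, rfl⟩; exact hpq rfl
    simp [Matrix.single, Matrix.one_apply_ne hpq, this]

lemma form2 (P : Matrix ι ι R →ₗ[R] Matrix ι ι R →ₗ[R] Matrix ι ι R) (hP : Equi P)
    (i j c : ι) (hij : i ≠ j) (hic : i ≠ c) (hjc : j ≠ c) :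
    ∃ a p q : R, P (E R i i) (E R j j) = a • 1 + p • E R i i + q • E R j j := by
  have hd : ∀ k, Commute (E R k k) (P (E R i i) (E R j j)) := by
    intro k
    have : ∀ i, E R k k * E R i i = E R i i * E R k k := by
      intro i
      rw [E_mul, E_mul]; by_cases h : k = i
      · subst h; simp
      · simp [h, Ne.symm h]
    exact comm_of P hP _ _ _ (this _) (this _)
  have ho : ∀ k l, k ≠ i → l ≠ i → k ≠ j → l ≠ j → Commute (E R k l) (P (E R i i) (E R j j)) := by
    intro k l hk hl hk' hl'
    have h1 : E R k l * E R i i = E R i i * E R k l := by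
      rw [E_mul, E_mul]; simp [hl, hk.symm]
    have h2 : E R k l * E R j j = E R j j * E R k l := by
      rw [E_mul, E_mul]; simp [hl', hk'.symm]
    exact comm_of P hP _ _ _ h1 h2
  set W := P (E R i i) (E R j j) with hW
  refine ⟨W c c, W i i - W c c, W j j - W c c, ?_⟩
  ext p q
  by_cases hpq : p = q
  · subst hpq
    by_cases hp : p = i
    · subst hp; simp [Matrix.single, hij.symm]
    · by_cases hp' : p = j
      · subst hp'; simp [Matrix.single, hij]
      · simp [Matrix.single, Ne.symm hp, Ne.symm hp',
          diag_eq_of_commute_single (ho p c hp hic.symm hp' hjc.symm)]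
  · have h0 := row_eq_zero_of_commute_single (hd p) (Ne.symm hpq)
    rw [h0]
    have h1 : ¬ (i = p ∧ i = q) := by rintro ⟨rfl, rfl⟩; exact hpq rfl
    have h2 : ¬ (j = p ∧ j = q) := by rintro ⟨rfl, rfl⟩; exact hpq rfl
    simp [Matrix.single, Matrix.one_apply_ne hpq, h1, h2]

theorem classify [Invertible (2 : R)] (P : Matrix ι ι R →ₗ[R] Matrix ι ι R →ₗ[R] Matrix ι ι R)
    (hs : ∀ x y, P x y = P y x) (hP : Equi P) (i j c : ι) (hij : i ≠ j) (hic : i ≠ c) (hjc : j ≠ c) :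
    ∃ α β γ δ : R, P = mdl α β γ δ := by
  obtain ⟨a0, b0, h0⟩ := form1 P hP i c hic
  obtain ⟨a1, b1, h1⟩ := form1 P hP j c hjc
  obtain ⟨d, p, q, h2⟩ := form2 P hP i j c hij hic hjc
  have hji := hij.symm
  have hci := hic.symm
  have hcj := hjc.symm
  have hh : ∀ x : R, ⅟2 * x + ⅟2 * x = x := by
    intro x; rw [← two_mul, ← mul_assoc, mul_invOf_self, one_mul]
  have half : ∀ (x y : Matrix ι ι R), x + x = y → x = (⅟2 : R) • y := by
    rintro x y rfl
    rw [← two_smul R x, smul_smul, invOf_mul_self, one_smul]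
  -- P(e_ij, e_ii)
  have k1 : P (E R i j) (E R i i) = (⅟2 : R) • (b0 • E R i j) := by
    have e := hP (E R i j) (E R i i) (E R i i)
    rw [h0, hs (E R i i) (_ - _)] at e
    simp [mul_add, add_mul, hij, hji] at e
    apply half
    rw [← neg_inj]; simp only [smul_single, smul_eq_mul, mul_one]; rw [e]; abel
  have k2 : P (E R i j) (E R j j) = (⅟2 : R) • (b1 • E R i j) := by
    have e := hP (E R i j) (E R j j) (E R j j)
    rw [h1, hs (E R j j) (_ - _)] at e
    simp [mul_add, add_mul, hij, hji] at e
    apply half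
    simp only [smul_single, smul_eq_mul, mul_one]; rw [e]
  have s1 := hP (E R j i) (E R i j) (E R i i)
  have s2 := hP (E R j i) (E R i j) (E R j j)
  have s3 := hP (E R i j) (E R i i) (E R j j)
  rw [k1] at s1
  rw [k2] at s2
  rw [h2, hs (E R i i) (_ - _)] at s3
  simp [mul_add, add_mul, hij, hji, k1, k2] at s1 s2 s3
  rw [h0, hs (E R j j) (E R i i), h2] at s1
  rw [h1, h2] at s2
  set X := P (E R i j) (E R j i)
  have s := congrArg₂ (· + ·) s1 s2
  have sc := congrFun (congrFun s c) c
  have sj := congrFun (congrFun s j) j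
  have s3' := congrFun (congrFun s3 i) j
  simp [Matrix.single, hij, hji, hic, hci, hjc, hcj] at sc sj s3'
  have ha : a1 = a0 := by linear_combination -sc
  have hb : b1 = b0 := by
    have t1 := hh b1
    have t0 := hh b0
    linear_combination (-2) * sj + t0 + t1 - 2 * ha
  have hpq : p = q := by
    rw [hb] at s3'
    linear_combination - s3'
  subst ha hb hpq
  refine ⟨b1 * ⅟2 - p, p, a1 - d, d, ?_⟩
  rw [← sub_eq_zero]
  apply vanish _ _ _ i j c hij hic hjc
  · simp only [LinearMap.sub_apply, h0, mdl_apply]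
    simp
    have e : single i i b1 = single i i (b1 * ⅟2 - p) + single i i (b1 * ⅟2 - p)
        + (single i i p + single i i p) := by
      simp only [← single_add]
      congr 1
      linear_combination - hh b1
    rw [e]; abel
  · simp only [LinearMap.sub_apply, h2, mdl_apply]
    simp [hij, hji]
    abel
  · intro x y
    simp only [LinearMap.sub_apply, hs x y, mdl_apply, trace_mul_comm x y, mul_comm x.trace, add_comm (x * y), add_comm (x.trace • y)]
  · intro x y z
    have A := hP x y z
    have B := mdl_equi (b1 * ⅟2 - p) p (a1 - d) d x y z
    simp only [LinearMap.sub_apply, mul_sub, sub_mul] at A B ⊢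
    rw [sub_sub_sub_comm, A, B]; abel

/-- symmetrized transported product -/
noncomputable def PP (l : Matrix ι ι R ≃ₗ[R] Matrix ι ι R) :
    Matrix ι ι R →ₗ[R] Matrix ι ι R →ₗ[R] Matrix ι ι R :=
  LinearMap.mk₂ R (fun x y => l.symm (l x * l y + l y * l x))
    (by intro x y z; rw [← map_add]; congr 1; simp only [map_add, add_mul, mul_add]; abel)
    (by intro c x y; rw [← map_smul]; congr 1
        simp only [map_smul, smul_mul_assoc, mul_smul_comm, smul_add])
    (by intro x y z; rw [← map_add]; congr 1; simp only [map_add, add_mul, mul_add]; abel)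
    (by intro c x y; rw [← map_smul]; congr 1
        simp only [map_smul, smul_mul_assoc, mul_smul_comm, smul_add])

lemma l_PP (l : Matrix ι ι R ≃ₗ[R] Matrix ι ι R) (x y : Matrix ι ι R) :
    l (PP l x y) = l x * l y + l y * l x := by
  simp [PP]

lemma entry {x y : Matrix ι ι R} (h : x = y) (i j : ι) : x i j = y i j := by rw [h]

theorem main [IsDomain R] [Invertible (2 : R)] (i j c : ι) (hij : i ≠ j) (hic : i ≠ c) (hjc : j ≠ c)
    (l : Matrix ι ι R ≃ₗ[R] Matrix ι ι R)
    (hLie : ∀ x y : Matrix ι ι R, l (x * y - y * x) = l x * l y - l y * l x) :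
    ∃ m n₀ : Matrix ι ι R →ₗ[R] Matrix ι ι R,
      (∀ x : Matrix ι ι R, l x = m x + n₀ x) ∧
      Function.Bijective m ∧
      ((∀ x y : Matrix ι ι R, m (x * y) = m x * m y) ∨
        (∀ x y : Matrix ι ι R, m (x * y) = -(m y * m x))) ∧
      (∀ x : Matrix ι ι R,
        ∃ r : R, n₀ x = algebraMap R (Matrix ι ι R) r) ∧
      (∀ x y : Matrix ι ι R, n₀ (x * y - y * x) = 0) := by
  have hji := hij.symm
  have hci := hic.symm
  have hcj := hjc.symm
  have hs : ∀ x y, PP l x y = PP l y x := by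
    intro x y; apply l.injective; rw [l_PP, l_PP, add_comm]
  have hE : Equi (PP l) := by
    intro x y z
    apply l.injective
    simp only [map_add, hLie, l_PP]
    noncomm_ring
  have hA : ∀ x y z, PP l (PP l x y) z - PP l x (PP l y z)
      = y * (x * z - z * x) - (x * z - z * x) * y := by
    intro x y z
    apply l.injective
    rw [map_sub]
    simp only [hLie, l_PP]
    noncomm_ring
  -- image of one
  have center : ∀ f : Matrix ι ι R ≃ₗ[R] Matrix ι ι R,
      (∀ x y : Matrix ι ι R, f (x * y - y * x) = f x * f y - f y * f x) →
      ∃ w : R, f 1 = w • (1 : Matrix ι ι R) := by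
    intro f hf
    have : f 1 ∈ Set.range (Matrix.scalar ι) := by
      apply mem_range_scalar_of_commute_single
      intro p q _
      have h := hf (f.symm (single p q 1)) 1
      simp at h
      exact sub_eq_zero.mp h.symm
    obtain ⟨w, hw⟩ := this
    refine ⟨w, ?_⟩
    rw [← hw]; ext p q; simp [Matrix.one_apply, Matrix.diagonal_apply]
  obtain ⟨w, hw⟩ := center l hLie
  obtain ⟨u, hu⟩ := center l.symm (by
    intro x y; apply l.injective; simp [hLie])
  have huw : u * w = 1 := by
    have : l (l.symm 1) = 1 := by simp
    rw [hu, map_smul, hw, smul_smul] at this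
    simpa using entry this i i
  have hP1 : ∀ y, PP l 1 y = (2 * w) • y := by
    intro y; apply l.injective
    rw [l_PP, hw, map_smul]; simp; module
  obtain ⟨α, β, γ, δ, hP⟩ := classify (PP l) hs hE i j c hij hic hjc
  rw [hP] at hP1 hA
  have r1 : 2 * α + Fintype.card ι * β = 2 * w := by
    have := entry (hP1 (E R i j)) i j
    simp [mdl_apply, hij, Matrix.one_apply] at this
    linear_combination this
  have hα : α * α = 1 := by
    have := entry (hA (E R i j) (E R j c) (E R c i)) c c
    simp [mdl_apply, hij, hic, hjc, hji, hci, hcj] at this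
    exact this
  have r2 : α * β + γ * w = 0 := by
    have := entry (hA (E R i j) (E R j i) (E R i c)) i c
    rw [mdl_apply _ _ _ _ (E R i j) (E R j i)] at this
    simp only [map_add, map_smul, LinearMap.add_apply, LinearMap.smul_apply, hP1] at this
    simp [mdl_apply, hij, hic, hjc, hji, hci, hcj] at this
    linear_combination ⅟2 * this - (α * β + γ * w) * invOf_mul_self (2 : R)
  have r3 : 2 * w * δ = - β ^ 2 := by
    have := entry (hA (E R i i) (E R j j) (E R i j)) i j
    rw [mdl_apply _ _ _ _ (E R i i) (E R j j)] at this
    simp only [map_add, map_smul, LinearMap.add_apply, LinearMap.smul_apply, hP1] at this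
    simp [mdl_apply, hij, hic, hjc, hji, hci, hcj] at this
    linear_combination this + hα
  have hα' : α = 1 ∨ α = -1 := mul_self_eq_one_iff.mp hα
  obtain ⟨t, ht⟩ : ∃ t, t = ⅟2 * u * β := ⟨_, rfl⟩
  have h22 : (⅟2 : R) * 2 = 1 := invOf_mul_self _
  have ht1 : 2 * w * t = β := by
    rw [ht]; linear_combination (w * u * β) * h22 + β * huw
  have ht2 : γ = -2 * α * t := by
    rw [ht]; linear_combination u * r2 - γ * huw + α * u * β * h22
  have ht3 : δ = - (β * t) := by
    rw [ht]; linear_combination ⅟2 * u * r3 - δ * huw - w * u * δ * h22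
  have ht4 : 1 - t * Fintype.card ι = u * α := by
    rw [ht]; linear_combination - ⅟2 * u * r1 - u * w * h22 + α * u * h22 - huw
  let T : Matrix ι ι R →ₗ[R] Matrix ι ι R := (t • Matrix.traceLinearMap ι R R).smulRight 1
  have hT : ∀ x, T x = (t * x.trace) • 1 := by intro x; simp [T]
  let s : Matrix ι ι R →ₗ[R] Matrix ι ι R := LinearMap.id - T
  have hsx : ∀ x, s x = x - (t * x.trace) • 1 := by intro x; simp [s, hT]
  have tr0 : ∀ x y : Matrix ι ι R, (x * y - y * x).trace = 0 := by
    intro x y; rw [trace_sub, trace_mul_comm, sub_self]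
  have sbij : Function.Bijective s := by
    constructor
    · rw [← LinearMap.ker_eq_bot, LinearMap.ker_eq_bot']
      intro x hx
      rw [hsx] at hx
      have h1 : x.trace * (u * α) = 0 := by
        have := congrArg Matrix.trace hx
        simp [trace_sub, trace_smul] at this
        rw [← ht4]; linear_combination this
      have h2 : x.trace = 0 := by
        linear_combination w * α * h1 - x.trace * α * α * huw - x.trace * hα
      simpa [h2] using hx
    · intro y
      refine ⟨y + (t * α * w * y.trace) • 1, ?_⟩
      rw [hsx]
      have : (y + (t * α * w * y.trace) • (1 : Matrix ι ι R)).trace = α * w * y.trace := by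
        simp [trace_add, trace_smul]
        linear_combination (- α * w * y.trace) * ht4 - y.trace * α * α * huw - y.trace * hα
      rw [this]; module
  have sP : ∀ x y, PP l (s x) (s y) = α • s (x * y + y * x) := by
    intro x y
    have e1 : ∀ z, mdl α β γ δ z (1 : Matrix ι ι R) = (2 * w) • z := by
      intro z; rw [← hP1, ← hP, hs]
    rw [hP, hsx, hsx, hsx]
    simp only [map_sub, LinearMap.sub_apply, map_smul, LinearMap.smul_apply, hP1, e1]
    rw [mdl_apply, trace_add, trace_mul_comm y x, ht2, ht3, ← ht1]
    module
  have sC : ∀ x y, s x * s y - s y * s x = s (x * y - y * x) := by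
    intro x y
    rw [hsx (_ - _), tr0, hsx, hsx]
    simp only [mul_sub, sub_mul, smul_mul_assoc, mul_smul_comm, one_mul, mul_one]
    module
  have main2 : ∀ x y, (2 : R) • (l (s x) * l (s y))
      = l (s ((x * y - y * x) + α • (x * y + y * x))) := by
    intro x y
    rw [map_add s, map_smul s, ← sP, ← sC, map_add, hLie, l_PP, two_smul]; abel
  have cancel2 : ∀ x y : Matrix ι ι R, (2 : R) • x = (2 : R) • y → x = y := by
    intro x y h
    have := congrArg (fun z => (⅟2 : R) • z) h
    simpa [smul_smul] using this
  refine ⟨l.toLinearMap ∘ₗ s, l.toLinearMap ∘ₗ T, ?_, ?_, ?_, ?_, ?_⟩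
  · intro x; simp [s]
  · exact l.bijective.comp sbij
  · rcases hα' with h | h
    · left
      intro x y
      apply cancel2
      simp only [LinearMap.comp_apply, LinearEquiv.coe_coe]
      rw [main2, h, ← map_smul, ← map_smul]
      congr 2; module
    · right
      intro x y
      apply cancel2
      simp only [LinearMap.comp_apply, LinearEquiv.coe_coe]
      rw [smul_neg, main2, h, ← map_smul, ← map_smul, ← map_neg, ← map_neg]
      congr 2; module
  · intro x
    refine ⟨t * x.trace * w, ?_⟩
    simp only [LinearMap.comp_apply, LinearEquiv.coe_coe, hT]
    rw [map_smul, hw, smul_smul, Algebra.algebraMap_eq_smul_one]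
  · intro x y
    simp only [LinearMap.comp_apply, LinearEquiv.coe_coe, hT, tr0]
    simp

end LieAux

/-- **Corollary 4.7.**  Let `n ≥ 3` and let `R` be a commutative domain with
`1/2 ∈ R`.  If `l : M_n(R) → M_n(R)` is a Lie isomorphism of the full algebra of
`n × n` matrices over `R`, then `l = m + n₀`, where `m` is an algebra isomorphism or
the negative of an algebra anti-isomorphism and `n₀ : M_n(R) → R·1` is a linear map
vanishing on each commutator. -/
theorem stmt17 (n : ℕ) (hn : 3 ≤ n) (R : Type*) [CommRing R] [IsDomain R]
    [Invertible (2 : R)]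
    (l : Matrix (Fin n) (Fin n) R ≃ₗ[R] Matrix (Fin n) (Fin n) R)
    (hLie : ∀ x y : Matrix (Fin n) (Fin n) R,
      l (x * y - y * x) = l x * l y - l y * l x) :
    ∃ m n₀ : Matrix (Fin n) (Fin n) R →ₗ[R] Matrix (Fin n) (Fin n) R,
      (∀ x : Matrix (Fin n) (Fin n) R, l x = m x + n₀ x) ∧
      Function.Bijective m ∧
      ((∀ x y : Matrix (Fin n) (Fin n) R, m (x * y) = m x * m y) ∨
        (∀ x y : Matrix (Fin n) (Fin n) R, m (x * y) = -(m y * m x))) ∧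
      (∀ x : Matrix (Fin n) (Fin n) R,
        ∃ r : R, n₀ x = algebraMap R (Matrix (Fin n) (Fin n) R) r) ∧
      (∀ x y : Matrix (Fin n) (Fin n) R, n₀ (x * y - y * x) = 0) := by
  exact LieAux.main (⟨0, by omega⟩ : Fin n) ⟨1, by omega⟩ ⟨2, by omega⟩
    (by simp) (by simp) (by simp) l hLie
end

section
/- Let R be a commutative ring with 1/2 ∈ R and let A be a unital prime R-algebra containing a nontrivial idempotent e, with f = 1 − e, such that eZ(A)e = Z(eAe) ≠ eAe and fZ(A)f = Z(fAf) ≠ fAf. Then every Lie isomorphism l : A → A is of the standard form: l = m + n, where m : A → A is an injective algebra homomorphism or the negative of an injective algebra anti-homomorphism, and n : A → Z(A) is an R-linear map with n([x, y]) = 0 for all x, y ∈ A. -/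
def Cen {A : Type*} [Ring A] (z : A) : Prop := ∀ g : A, z * g = g * z

def Pc {A : Type*} [Ring A] (p q x : A) : Prop := p * x = x ∧ x * q = x

structure Setup {A : Type*} [Ring A] (e f : A) (B : A → A → A) : Prop where
  prime : ∀ a b : A, (∀ x : A, a * x * b = 0) → a = 0 ∨ b = 0
  ee : e * e = e
  ff : f * f = f
  ef : e * f = 0
  fe : f * e = 0
  sum : e + f = 1
  e0 : e ≠ 0
  f0 : f ≠ 0
  two : ∀ a : A, a + a = 0 → a = 0
  half : ∃ h : A, Cen h ∧ h + h = 1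
  Ze : ∀ w, Pc e e w → (∀ a, Pc e e a → w * a = a * w) → ∃ z, Cen z ∧ w = z * e
  Zf : ∀ w, Pc f f w → (∀ a, Pc f f a → w * a = a * w) → ∃ z, Cen z ∧ w = z * f
  nce : ∃ a a', Pc e e a ∧ Pc e e a' ∧ a * a' - a' * a ≠ 0
  ncf : ∃ a a', Pc f f a ∧ Pc f f a' ∧ a * a' - a' * a ≠ 0
  add : ∀ x y z, B (x + y) z = B x z + B y z
  symm : ∀ x y, B x y = B y x
  FI : ∀ x y z, B x y * z - z * B x y + (B y z * x - x * B y z) + (B z x * y - y * B z x) = 0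
  inv : ∀ x y w, B x y * w - w * B x y = B (x * w - w * x) y + B x (y * w - w * y)
  assoc : ∀ x y z, B (B x y) z - B x (B y z) =
    y * (x * z - z * x) - (x * z - z * x) * y

namespace Setup

variable {A : Type*} [Ring A] {e f : A} {B : A → A → A}

theorem swap (S : Setup e f B) : Setup f e B where
  prime := S.prime
  ee := S.ff
  ff := S.ee
  ef := S.fe
  fe := S.ef
  sum := by rw [add_comm]; exact S.sum
  e0 := S.f0
  f0 := S.e0
  two := S.two
  half := S.half
  Ze := S.Zf
  Zf := S.Ze
  nce := S.ncf
  ncf := S.nce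
  add := S.add
  symm := S.symm
  FI := S.FI
  inv := S.inv
  assoc := S.assoc

theorem addr (S : Setup e f B) (x y z : A) : B z (x + y) = B z x + B z y := by
  rw [S.symm, S.add, S.symm x, S.symm y]

theorem zl (S : Setup e f B) (z : A) : B 0 z = 0 := by
  have := S.add 0 0 z
  rw [add_zero] at this
  linear_combination (norm := noncomm_ring) -this

theorem zr (S : Setup e f B) (z : A) : B z 0 = 0 := by rw [S.symm, S.zl]

theorem negl (S : Setup e f B) (x z : A) : B (-x) z = - B x z := by
  have := S.add x (-x) z
  rw [add_neg_cancel, S.zl] at this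
  linear_combination (norm := noncomm_ring) -this

theorem negr (S : Setup e f B) (x z : A) : B z (-x) = - B z x := by
  rw [S.symm, S.negl, S.symm]

theorem subl (S : Setup e f B) (x y z : A) : B (x - y) z = B x z - B y z := by
  rw [sub_eq_add_neg, S.add, S.negl, sub_eq_add_neg]

/- corners -/
theorem fx (S : Setup e f B) {x q : A} (hx : Pc e q x) : f * x = 0 := by
  linear_combination (norm := noncomm_ring) -f * hx.1 + S.fe * x

theorem xe (S : Setup e f B) {x q : A} (hx : Pc q f x) : x * e = 0 := by
  linear_combination (norm := noncomm_ring) -hx.2 * e + x * S.fe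

theorem xf (S : Setup e f B) {x q : A} (hx : Pc q e x) : x * f = 0 := S.swap.xe hx
theorem ex (S : Setup e f B) {x q : A} (hx : Pc f q x) : e * x = 0 := S.swap.fx hx

theorem pmul {p q r x y : A} (hx : Pc p q x) (hy : Pc q r y) : Pc p r (x * y) := by
  refine ⟨?_, ?_⟩
  · rw [← mul_assoc, hx.1]
  · rw [mul_assoc, hy.2]

theorem padd {p q x y : A} (hx : Pc p q x) (hy : Pc p q y) : Pc p q (x + y) := by
  refine ⟨?_, ?_⟩
  · rw [mul_add, hx.1, hy.1]
  · rw [add_mul, hx.2, hy.2]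

theorem pneg {p q x : A} (hx : Pc p q x) : Pc p q (-x) := by
  refine ⟨?_, ?_⟩
  · rw [mul_neg, hx.1]
  · rw [neg_mul, hx.2]

theorem psub {p q x y : A} (hx : Pc p q x) (hy : Pc p q y) : Pc p q (x - y) := by
  rw [sub_eq_add_neg]; exact padd hx (pneg hy)

theorem pcen {p q x z : A} (hz : Cen z) (hx : Pc p q x) : Pc p q (z * x) := by
  refine ⟨?_, ?_⟩
  · rw [← mul_assoc, ← hz, mul_assoc, hx.1]
  · rw [mul_assoc, hx.2]

theorem pef (S : Setup e f B) (u : A) : Pc e f (e * u * f) := by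
  refine ⟨?_, ?_⟩
  · rw [← mul_assoc, ← mul_assoc, S.ee]
  · rw [mul_assoc, S.ff]
theorem pee (S : Setup e f B) (u : A) : Pc e e (e * u * e) := by
  refine ⟨?_, ?_⟩
  · rw [← mul_assoc, ← mul_assoc, S.ee]
  · rw [mul_assoc, S.ee]
theorem pe (S : Setup e f B) : Pc e e e := ⟨S.ee, S.ee⟩
theorem pf (S : Setup e f B) : Pc f f f := ⟨S.ff, S.ff⟩

theorem loyal (S : Setup e f B) (a b : A) (h : ∀ x, Pc e f x → a * x * b = 0) :
    a * e = 0 ∨ f * b = 0 := by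
  apply S.prime
  intro x
  have := h _ (S.pef x)
  linear_combination (norm := noncomm_ring) this

theorem loyalL (S : Setup e f B) {a q : A} (ha : Pc q e a) (h : ∀ x, Pc e f x → a * x = 0) :
    a = 0 := by
  rcases S.loyal a f (fun x hx => by rw [h x hx, zero_mul]) with h | h
  · rw [← ha.2, h]
  · rw [S.ff] at h; exact absurd h S.f0

theorem loyalR (S : Setup e f B) {b q : A} (hb : Pc f q b) (h : ∀ x, Pc e f x → x * b = 0) :
    b = 0 := by
  rcases S.loyal e b (fun x hx => by rw [mul_assoc, h x hx, mul_zero]) with h | h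
  · rw [S.ee] at h; exact absurd h S.e0
  · rw [← hb.1, h]

theorem creg (S : Setup e f B) {z x : A} (hz : Cen z) (h : z * x = 0) : z = 0 ∨ x = 0 := by
  apply S.prime
  intro y
  rw [hz y, mul_assoc, h, mul_zero]

theorem exx (S : Setup e f B) : ∃ x, Pc e f x ∧ x ≠ 0 := by
  by_contra! h
  have := S.loyalL (a := e) S.pe (fun x hx => by rw [h x hx, mul_zero])
  exact S.e0 this

theorem csub {z w : A} (hz : Cen z) (hw : Cen w) : Cen (z - w) := by
  intro g; rw [sub_mul, mul_sub, hz, hw]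
theorem cadd {z w : A} (hz : Cen z) (hw : Cen w) : Cen (z + w) := by
  intro g; rw [add_mul, mul_add, hz, hw]
theorem cneg {z : A} (hz : Cen z) : Cen (-z) := by
  intro g; rw [neg_mul, mul_neg, hz]
theorem cmul {z w : A} (hz : Cen z) (hw : Cen w) : Cen (z * w) := by
  intro g; rw [mul_assoc, hw, ← mul_assoc, hz, mul_assoc]
theorem c0 : Cen (0 : A) := by intro g; simp

theorem cmulreg (S : Setup e f B) {z x : A} (hz : Cen z) (h : z * x = 0) (hx : x ≠ 0) : z = 0 :=
  (S.creg hz h).resolve_right hx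

/- weights -/
theorem w1 (S : Setup e f B) {w : A} (h : e * w - w * e = w) : Pc e f w := by
  have h11 : e * w * e = 0 := by
    linear_combination (norm := noncomm_ring) -e * h * e + S.ee * w * e - e * w * S.ee
  have hs := S.sum
  have h2 : w * e = 0 := by
    apply S.two
    linear_combination (norm := noncomm_ring) -h * e + h11 - w * S.ee
  constructor
  · linear_combination (norm := noncomm_ring) h + h2
  · linear_combination (norm := noncomm_ring) w * hs - h2

theorem w1' (S : Setup e f B) {w : A} (h : e * w - w * e = -w) : Pc f e w := by
  apply S.swap.w1
  have h1 : f = 1 - e := by linear_combination (norm := noncomm_ring) S.sum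
  rw [h1]
  linear_combination (norm := noncomm_ring) -h

theorem wdiag (S : Setup e f B) {w : A} (h : e * w = w * e) : w = e * w * e + f * w * f := by
  have h1 : f = 1 - e := by linear_combination (norm := noncomm_ring) S.sum
  rw [h1]
  linear_combination (norm := noncomm_ring) - h * e + e * h - w * S.ee - S.ee * w

/-- If `w` commutes with `e` and `fAf`. -/
theorem wF (S : Setup e f B) {w : A} (h : e * w = w * e)
    (hf : ∀ b, Pc f f b → w * b = b * w) : ∃ z, Cen z ∧ w = e * w * e + z * f := by
  obtain ⟨z, hz, hz'⟩ := S.Zf (f * w * f) (S.swap.pee w) (by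
    intro b hb
    have := hf b hb
    linear_combination (norm := noncomm_ring) f * w * hb.1 - hb.2 * w * f + f * this + this * f +
       hb.1 * w - w * hb.2 - this)
  refine ⟨z, hz, ?_⟩
  rw [← hz']
  exact S.wdiag h

theorem wEF (S : Setup e f B) {w : A} (he : ∀ b, Pc e e b → w * b = b * w)
    (hf : ∀ b, Pc f f b → w * b = b * w) : ∃ z z', Cen z ∧ Cen z' ∧ w = z * e + z' * f := by
  have h := (he e S.pe).symm
  obtain ⟨z', hz', h1⟩ := S.wF h hf
  have h2 : f * w = w * f := (hf f S.pf).symm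
  obtain ⟨z, hz, h3⟩ := S.swap.wF h2 he
  refine ⟨z, z', hz, hz', ?_⟩
  have h4 := S.wdiag h
  linear_combination (norm := noncomm_ring) h1 + h3 - h4

end Setup

namespace Setup

variable {A : Type*} [Ring A] {e f : A} {B : A → A → A}

theorem wtB (S : Setup e f B) (x y : A) : e * B x y - B x y * e
    = B (e * x - x * e) y + B x (e * y - y * e) := by
  have h := S.inv x y e
  have h1 : x * e - e * x = -(e * x - x * e) := by abel
  have h2 : y * e - e * y = -(e * y - y * e) := by abel
  rw [h1, h2, S.negl, S.negr] at h
  linear_combination (norm := noncomm_ring) -h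

theorem adx (S : Setup e f B) {x : A} (hx : Pc e f x) : e * x - x * e = x := by
  rw [hx.1, S.xe hx, sub_zero]
theorem ady (S : Setup e f B) {x : A} (hx : Pc f e x) : e * x - x * e = -x := by
  rw [hx.2, S.ex hx, zero_sub]
theorem ada (S : Setup e f B) {x : A} (hx : Pc e e x) : e * x - x * e = 0 := by
  rw [hx.1, hx.2, sub_self]
theorem adb (S : Setup e f B) {x : A} (hx : Pc f f x) : e * x - x * e = 0 := by
  rw [S.ex hx, S.xe hx, sub_self]

/-- `B(d,x) ∈ eAf` for `d` commuting with `e`. -/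
theorem Bdx (S : Setup e f B) {d x : A} (hd : e * d - d * e = 0) (hx : Pc e f x) :
    Pc e f (B d x) := by
  apply S.w1
  rw [S.wtB, hd, S.adx hx, S.zl, zero_add]

theorem Bdy (S : Setup e f B) {d x : A} (hd : e * d - d * e = 0) (hx : Pc f e x) :
    Pc f e (B d x) := by
  apply S.w1'
  rw [S.wtB, hd, S.ady hx, S.zl, zero_add, S.negr]

theorem Bdd (S : Setup e f B) {d x : A} (hd : e * d - d * e = 0) (hx : e * x - x * e = 0) :
    e * B d x = B d x * e := by
  have := S.wtB d x
  rw [hd, hx, S.zl, S.zr, zero_add] at this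
  exact sub_eq_zero.1 this

theorem Bxx (S : Setup e f B) {x x' : A} (hx : Pc e f x) (hx' : Pc e f x') : B x x' = 0 := by
  have h1 := S.wtB x x'
  rw [S.adx hx, S.adx hx'] at h1
  have h2 := S.FI x x' e
  have k1 := S.Bdx (S.ada S.pe) hx
  have k2 := S.Bdx (S.ada S.pe) hx'
  rw [S.symm x' e] at h2
  have p1 : B e x' * x = 0 := by
    linear_combination (norm := noncomm_ring) B e x' * S.fx hx - k2.2 * x
  have p2 : B e x * x' = 0 := by
    linear_combination (norm := noncomm_ring) B e x * S.fx hx' - k1.2 * x'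
  have p3 : x * B e x' = 0 := by
    linear_combination (norm := noncomm_ring) S.xe hx * B e x' - x * k2.1
  have p4 : x' * B e x = 0 := by
    linear_combination (norm := noncomm_ring) S.xe hx' * B e x - x' * k1.1
  apply S.two
  linear_combination (norm := noncomm_ring) -h1 - h2 + p1 + p2 - p3 - p4

theorem kap (S : Setup e f B) : ∃ k, Cen k ∧ (∀ x, Pc e f x → B e x = k * x) ∧
    (∀ y, Pc f e y → B e y = k * y) := by
  obtain ⟨z, z', hz, hz', h⟩ := S.wEF (w := B e e) (by
      intro b hb
      have h1 := S.inv e e b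
      rw [S.ada hb, S.zl, S.zr, zero_add] at h1
      exact sub_eq_zero.1 h1) (by
      intro b hb
      have h1 := S.inv e e b
      rw [S.adb hb, S.zl, S.zr, zero_add] at h1
      exact sub_eq_zero.1 h1)
  obtain ⟨t, ht, ht1⟩ := S.half
  refine ⟨t * (z - z'), cmul ht (csub hz hz'), ?_, ?_⟩
  · intro x hx
    have h1 := S.FI e e x
    have k := S.Bdx (S.ada S.pe) hx
    rw [S.symm x e, h, S.xe k, k.1, add_mul, mul_add, mul_assoc, hx.1, mul_assoc, S.fx hx, ← mul_assoc, ← hz,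
      mul_assoc, S.xe hx, ← mul_assoc, ← hz', mul_assoc z', hx.2] at h1
    have h2 : B e x + B e x = (z - z') * x := by
      linear_combination (norm := noncomm_ring) -h1
    linear_combination (norm := noncomm_ring) t * h2 - ht1 * B e x
  · intro x hx
    have h1 := S.FI e e x
    have k := S.Bdy (S.ada S.pe) hx
    rw [S.symm x e, h, S.ex k, k.2, add_mul, mul_add, mul_assoc, S.ex hx, mul_assoc, hx.1, ← mul_assoc, ← hz,
      mul_assoc, hx.2, ← mul_assoc, ← hz', mul_assoc z', S.xf hx] at h1
    have h2 : B e x + B e x = (z - z') * x := by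
      linear_combination (norm := noncomm_ring) h1
    linear_combination (norm := noncomm_ring) t * h2 - ht1 * B e x

end Setup

def isG {A : Type*} [Ring A] (e f : A) (B : A → A → A) (a g : A) : Prop :=
  Pc e e a ∧ Pc e e g ∧ (∀ x, Pc e f x → B a x = g * x) ∧ (∀ y, Pc f e y → B a y = y * g)

namespace Setup

variable {A : Type*} [Ring A] {e f : A} {B : A → A → A}

theorem gEx (S : Setup e f B) {a : A} (ha : Pc e e a) : ∃ g, isG e f B a g := by
  obtain ⟨k, hk, kx, ky⟩ := S.kap
  obtain ⟨r, hr, h⟩ := S.wF (w := B e a) (S.Bdd (S.ada S.pe) (S.ada ha)) (by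
    intro b hb
    have h1 := S.inv e a b
    have h2 : a * b - b * a = 0 := by
      linear_combination (norm := noncomm_ring) a * S.ex hb - ha.2 * b - b * S.fx ha + hb.2 * a +
        b * S.fx ha - hb.2 * a + b * ha.1 - S.xe hb * a
    rw [S.adb hb, h2, S.zl, S.zr, zero_add] at h1
    exact sub_eq_zero.1 h1)
  set p := e * B e a * e with hp
  have pp : Pc e e p := S.pee _
  refine ⟨p - r * e - k * a, ha, psub (psub pp (pcen hr S.pe)) (pcen hk ha), ?_, ?_⟩
  · intro x hx
    have h1 := S.FI a x e
    have hb := S.Bdx (S.ada ha) hx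
    rw [S.symm x e, kx x hx, h, S.xe hb, hb.1] at h1
    linear_combination (norm := noncomm_ring) -h1 + k * S.xe hx * a - k * x * ha.1 + r * S.fx hx
      + x * pp.1 - S.xe hx * p + hk a * x + hr x * f - r * hx.2 + r * hx.1
  · intro x hx
    have h1 := S.FI a x e
    have hb := S.Bdy (S.ada ha) hx
    rw [S.symm x e, ky x hx, h, S.ex hb, hb.2] at h1
    linear_combination (norm := noncomm_ring) h1 - hr x * e + r * hx.2 - hk x * a - hk a * x
      + k * a * S.ex hx - k * ha.2 * x - p * S.ex hx + pp.2 * x - r * hx.1 - hr x * f + r * S.xf hx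

end Setup

namespace Setup

variable {A : Type*} [Ring A] {e f : A} {B : A → A → A}

theorem gU (S : Setup e f B) {a g g' : A} (h : isG e f B a g) (h' : isG e f B a g') : g = g' := by
  rw [← sub_eq_zero]
  apply S.loyalL (psub h.2.1 h'.2.1)
  intro x hx
  rw [sub_mul, ← h.2.2.1 x hx, ← h'.2.2.1 x hx, sub_self]

/-- `g([a,a']) = [g(a),a']` -/
theorem gInv (S : Setup e f B) {a g a' : A} (h : isG e f B a g) (h' : Pc e e a') :
    isG e f B (a * a' - a' * a) (g * a' - a' * g) := by
  refine ⟨psub (pmul h.1 h') (pmul h' h.1), psub (pmul h.2.1 h') (pmul h' h.2.1), ?_, ?_⟩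
  · intro x hx
    have h1 := S.inv a x a'
    have k1 : x * a' = 0 := by
      linear_combination (norm := noncomm_ring) S.xe hx * a' - x * h'.1
    rw [k1, zero_sub, S.negr, h.2.2.1 _ (pmul h' hx), h.2.2.1 x hx] at h1
    linear_combination (norm := noncomm_ring) -h1 + g * k1
  · intro x hx
    have h1 := S.inv a x a'
    have k1 : a' * x = 0 := by
      linear_combination (norm := noncomm_ring) a' * S.ex hx - h'.2 * x
    rw [k1, sub_zero, h.2.2.2 _ (pmul hx h'), h.2.2.2 x hx] at h1
    linear_combination (norm := noncomm_ring) -h1 - k1 * g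

theorem isG_neg (S : Setup e f B) {a g : A} (h : isG e f B a g) : isG e f B (-a) (-g) := by
  refine ⟨pneg h.1, pneg h.2.1, ?_, ?_⟩
  · intro x hx
    rw [S.negl, h.2.2.1 x hx, neg_mul]
  · intro x hx
    rw [S.negl, h.2.2.2 x hx, mul_neg]

theorem gComm (S : Setup e f B) {a g a' g' : A} (h : isG e f B a g) (h' : isG e f B a' g') :
    g * a' - a' * g = a * g' - g' * a := by
  have h1 := S.gInv h h'.1
  have h2 := S.isG_neg (S.gInv h' h.1)
  rw [neg_sub, neg_sub] at h2
  exact S.gU h1 h2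

theorem gAss (S : Setup e f B) {a g a' g' : A} (h : isG e f B a g) (h' : isG e f B a' g') :
    g * g' - g' * g = a * a' - a' * a := by
  rw [← sub_eq_zero]
  apply S.loyalL (psub (psub (pmul h.2.1 h'.2.1) (pmul h'.2.1 h.2.1))
    (psub (pmul h.1 h'.1) (pmul h'.1 h.1)))
  intro x hx
  have h1 := S.assoc a x a'
  have k1 : x * a' = 0 := by
    linear_combination (norm := noncomm_ring) S.xe hx * a' - x * h'.1.1
  have k2 : x * a = 0 := by
    linear_combination (norm := noncomm_ring) S.xe hx * a - x * h.1.1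
  rw [h.2.2.1 x hx, S.symm x a', h'.2.2.1 x hx, S.symm (g * x), h'.2.2.1 _ (pmul h.2.1 hx),
    h.2.2.1 _ (pmul h'.2.1 hx)] at h1
  linear_combination (norm := noncomm_ring) -h1 - k2 * a' + k1 * a

theorem star (S : Setup e f B) {a g a' b t b' x : A} (h : isG e f B a g) (h' : Pc e e a')
    (k : isG f e B b t) (k' : Pc f f b') (hx : Pc e f x) :
    (a * a' - a' * a) * x * (b' * t - t * b') = (g * a' - a' * g) * x * (b' * b - b * b') := by
  have E : ∀ x, Pc e f x → B a b * x - x * B a b = a * x * t - g * x * b := by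
    intro x hx
    have h1 := S.FI a b x
    rw [k.2.2.2 x hx, S.symm x a, h.2.2.1 x hx] at h1
    have k1 : t * a = 0 := by
      linear_combination (norm := noncomm_ring) t * S.fx h.1 - k.2.1.2 * a
    have k2 : b * g = 0 := by
      linear_combination (norm := noncomm_ring) b * S.fx h.2.1 - k.1.2 * g
    linear_combination (norm := noncomm_ring) h1 - x * k1 + k2 * x
  have H : ∀ x, Pc e f x → (B a b * a' - a' * B a b) * x = 
      (a * a' - a' * a) * x * t - (g * a' - a' * g) * x * b := by
    intro x hx
    linear_combination (norm := noncomm_ring) E _ (pmul h' hx) - a' * E x hx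
  linear_combination (norm := noncomm_ring) H x hx * b' - H _ (pmul hx k')

theorem dich (S : Setup e f B) {a g a' b t b' : A} (h : isG e f B a g) (h' : Pc e e a')
    (k : isG f e B b t) (k' : Pc f f b') :
    ((a * a' - a' * a) = (g * a' - a' * g) ∨ (b' * b - b * b') = - (b' * t - t * b')) ∧ 
    ((a * a' - a' * a) = -(g * a' - a' * g) ∨ (b' * b - b * b') = (b' * t - t * b')) := by
  obtain ⟨gg, hgg⟩ := S.gEx h.2.1
  obtain ⟨g', hg'⟩ := S.gEx h'
  have e1 : gg * a' - a' * gg = a * a' - a' * a := by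
    rw [S.gComm hgg hg', S.gAss h hg']
  have pA := psub (pmul h.1 h') (pmul h' h.1)
  have pG := psub (pmul h.2.1 h') (pmul h' h.2.1)
  have pB := psub (pmul k' k.1) (pmul k.1 k')
  have pT := psub (pmul k' k.2.1) (pmul k.2.1 k')
  have X : ∀ x, Pc e f x → _ := fun x hx => S.star h h' k k' hx
  have Y : ∀ x, Pc e f x → _ := fun x hx => S.star hgg h' k k' hx
  rw [e1] at Y
  set d := a * a' - a' * a
  set d1 := g * a' - a' * g
  set c := b' * b - b * b'
  set c1 := b' * t - t * b'
  constructor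
  · rcases S.loyal (d - d1) (c + c1) (by
      intro x hx
      linear_combination (norm := noncomm_ring) X x hx - Y x hx) with h | h
    · left; rw [(psub pA pG).2] at h; exact sub_eq_zero.1 h
    · right; rw [(padd pB pT).1] at h; exact eq_neg_of_add_eq_zero_left h
  · rcases S.loyal (d + d1) (c - c1) (by
      intro x hx
      linear_combination (norm := noncomm_ring) - X x hx - Y x hx) with h | h
    · left; rw [(padd pA pG).2] at h; exact eq_neg_of_add_eq_zero_left h
    · right; rw [(psub pB pT).1] at h; exact sub_eq_zero.1 h

theorem sign (S : Setup e f B) : ∃ s : A, (s = 1 ∨ s = -1) ∧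
    (∀ a g, isG e f B a g → ∃ z, Cen z ∧ g = s * a + z * e) ∧
    (∀ a g, isG f e B a g → ∃ z, Cen z ∧ g = s * a + z * f) := by
  suffices H : ∃ s : A, (s = 1 ∨ s = -1) ∧
    (∀ a g a', isG e f B a g → Pc e e a' → g * a' - a' * g = s * (a * a' - a' * a)) ∧
    (∀ a g a', isG f e B a g → Pc f f a' → g * a' - a' * g = s * (a * a' - a' * a)) by
    obtain ⟨s, hs, h1, h2⟩ := H
    have hc : Cen s := by
      intro x; rcases hs with rfl | rfl <;> simp
    refine ⟨s, hs, ?_, ?_⟩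
    · intro a g h
      obtain ⟨z, hz, hh⟩ := S.Ze (g - s * a) (psub h.2.1 (pcen hc h.1)) (by
        intro a' h'
        linear_combination (norm := noncomm_ring) h1 a g a' h h' - hc a' * a)
      exact ⟨z, hz, by rw [← hh]; abel⟩
    · intro a g h
      obtain ⟨z, hz, hh⟩ := S.Zf (g - s * a) (psub h.2.1 (pcen hc h.1)) (by
        intro a' h'
        linear_combination (norm := noncomm_ring) h2 a g a' h h' - hc a' * a)
      exact ⟨z, hz, by rw [← hh]; abel⟩
  obtain ⟨a0, a1, ha0, ha1, hna⟩ := S.nce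
  obtain ⟨b1, b0, hb1, hb0, hnb⟩ := S.ncf
  obtain ⟨g0, hg0⟩ := S.gEx ha0
  obtain ⟨t0, ht0⟩ := S.swap.gEx hb0
  have ne : ∀ u v : A, u ≠ 0 → u = v → u = -v → False := by
    intro u v hu h1 h2
    apply hu
    apply S.two
    linear_combination (norm := noncomm_ring) h1 + h2
  by_cases hc : ∀ a g a', isG e f B a g → Pc e e a' → a * a' - a' * a = g * a' - a' * g
  · refine ⟨1, Or.inl rfl, ?_, ?_⟩
    · intro a g a' h h'
      rw [one_mul, hc a g a' h h']
    · intro b t b' k k'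
      have := (S.dich hg0 ha1 k k').2.resolve_left (fun h => ne _ _ hna (hc _ _ _ hg0 ha1) h)
      linear_combination (norm := noncomm_ring) this
  · push Not at hc
    obtain ⟨a, g, a', h, h', hne⟩ := hc
    have hB : ∀ b t b', isG f e B b t → Pc f f b' → (b' * b - b * b') = - (b' * t - t * b') := by
      intro b t b' k k'
      exact (S.dich h h' k k').1.resolve_left hne
    refine ⟨-1, Or.inr rfl, ?_, ?_⟩
    · intro a g a' h h'
      have := (S.dich h h' ht0 hb1).2.resolve_right (fun h => ne _ _ hnb h (hB _ _ _ ht0 hb1))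
      linear_combination (norm := noncomm_ring) this
    · intro b t b' k k'
      linear_combination (norm := noncomm_ring) -hB _ _ _ k k'

end Setup

namespace Setup

variable {A : Type*} [Ring A] {e f : A} {B : A → A → A}

theorem ind (S : Setup e f B) {P : A → Prop} (add : ∀ x y, P x → P y → P (x + y))
    (h11 : ∀ x, Pc e e x → P x) (h12 : ∀ x, Pc e f x → P x)
    (h21 : ∀ x, Pc f e x → P x) (h22 : ∀ x, Pc f f x → P x) (u : A) : P u := by
  have h : u = e * u * e + e * u * f + f * u * e + f * u * f := by
    have h1 : f = 1 - e := by linear_combination (norm := noncomm_ring) S.sum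
    rw [h1]; noncomm_ring
  rw [h]
  exact add _ _ (add _ _ (add _ _ (h11 _ (S.pee u)) (h12 _ (S.pef u))) (h21 _ (S.swap.pef u)))
    (h22 _ (S.swap.pee u))

theorem cenOf (S : Setup e f B) {w : A} (hx : ∀ x, Pc e f x → w * x = x * w)
    (hy : ∀ x, Pc f e x → w * x = x * w) : Cen w := by
  have k1 : (e * w - w) * e = 0 := by
    refine (S.loyal (e * w - w) f ?_).resolve_right (by rw [S.ff]; exact S.f0)
    intro x h
    linear_combination (norm := noncomm_ring) e * hx x h * f - hx x h * f + h.1 * w * f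
  have k2 : (f * w - w) * f = 0 := by
    refine (S.swap.loyal (f * w - w) e ?_).resolve_right (by rw [S.ee]; exact S.e0)
    intro x h
    linear_combination (norm := noncomm_ring) f * hy x h * e - hy x h * e + h.1 * w * e
  have h1 : f = 1 - e := by linear_combination (norm := noncomm_ring) S.sum
  have k3 : e * w = w * e := by
    rw [h1] at k2
    linear_combination (norm := noncomm_ring) k1 - k2
  have k4 : f * w = w * f := by
    rw [h1]
    linear_combination (norm := noncomm_ring) -k3
  intro u
  refine S.ind (P := fun u => w * u = u * w) ?_ ?_ hx hy ?_ u
  · intro x y h h'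
    simp only [mul_add, add_mul, h, h']
  · intro a ha
    have := (S.loyal (w * a - a * w) f (by
      intro x h
      linear_combination (norm := noncomm_ring) hx _ (pmul ha h) * f - a * hx x h * f)).resolve_right
        (by rw [S.ff]; exact S.f0)
    linear_combination (norm := noncomm_ring) this - w * ha.2 - a * k3 + ha.2 * w
  · intro a ha
    have := (S.swap.loyal (w * a - a * w) e (by
      intro x h
      linear_combination (norm := noncomm_ring) hy _ (pmul ha h) * e - a * hy x h * e)).resolve_right
        (by rw [S.ee]; exact S.e0)
    linear_combination (norm := noncomm_ring) this - w * ha.2 - a * k4 + ha.2 * w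

theorem central (S : Setup e f B) (C : A → A → A) 
    (add : ∀ x y z, C (x + y) z = C x z + C y z)
    (symm : ∀ x y, C x y = C y x)
    (FI : ∀ x y z, C x y * z - z * C x y + (C y z * x - x * C y z) + (C z x * y - y * C z x) = 0)
    (hax : ∀ a x, Pc e e a → Pc e f x → C a x = 0)
    (hay : ∀ a x, Pc e e a → Pc f e x → C a x = 0)
    (hbx : ∀ a x, Pc f f a → Pc e f x → C a x = 0)
    (hby : ∀ a x, Pc f f a → Pc f e x → C a x = 0)
    (hxx : ∀ a x, Pc e f a → Pc e f x → C a x = 0)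
    (hyy : ∀ a x, Pc f e a → Pc f e x → C a x = 0) (u v : A) : Cen (C u v) := by
  have dd : ∀ d d', (∀ x, Pc e f x → C d x = 0) → (∀ x, Pc f e x → C d x = 0) →
      (∀ x, Pc e f x → C d' x = 0) → (∀ x, Pc f e x → C d' x = 0) → Cen (C d d') := by
    intro d d' h1 h2 h3 h4
    apply S.cenOf
    · intro x hx
      have := FI d d' x
      rw [h3 x hx, symm x d, h1 x hx] at this
      linear_combination (norm := noncomm_ring) this
    · intro x hx
      have := FI d d' x
      rw [h4 x hx, symm x d, h2 x hx] at this
      linear_combination (norm := noncomm_ring) this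
  have xy : ∀ x y, Pc e f x → Pc f e y → Cen (C x y) := by
    intro x y hx hy
    obtain ⟨z, z', hz, hz', h⟩ := S.wEF (w := C x y) (by
      intro b hb
      have := FI x y b
      rw [symm y b, hax b x hb hx, hay b y hb hy] at this
      linear_combination (norm := noncomm_ring) this) (by
      intro b hb
      have := FI x y b
      rw [symm y b, hbx b x hb hx, hby b y hb hy] at this
      linear_combination (norm := noncomm_ring) this)
    have h1 := FI x y x
    rw [hxx x x hx hx, symm y x, h] at h1
    have h2 : (z - z') * x = 0 := by
      apply S.two
      linear_combination (norm := noncomm_ring) h1 - 2 * z * hx.1 - 2 * z' * S.fx hx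
        - 2 * hz x * e + 2 * z * S.xe hx - 2 * hz' x * f + 2 * z' * hx.2
    rcases S.creg (csub hz hz') h2 with h3 | h3
    · rw [sub_eq_zero] at h3
      rw [h, h3, ← mul_add, S.sum, mul_one]
      exact hz'
    · rw [h3]
      have := add 0 0 y
      rw [add_zero] at this
      have : C 0 y = 0 := by linear_combination (norm := noncomm_ring) -this
      rw [this]
      exact c0
  have cz : ∀ {w : A}, w = 0 → Cen w := by rintro _ rfl; exact c0
  refine S.ind (P := fun u => Cen (C u v)) ?_ ?_ ?_ ?_ ?_ u
  · intro x y h h'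
    rw [add]; exact cadd h h'
  all_goals
    intro u hu
    refine S.ind (P := fun v => Cen (C u v)) ?_ ?_ ?_ ?_ ?_ v
    · intro x y h h'
      rw [symm, add, symm x, symm y]; exact cadd h h'
    all_goals intro v hv
  · exact dd _ _ (fun x => hax _ _ hu) (fun x => hay _ _ hu) (fun x => hax _ _ hv) (fun x => hay _ _ hv)
  · exact cz (hax _ _ hu hv)
  · exact cz (hay _ _ hu hv)
  · exact dd _ _ (fun x => hax _ _ hu) (fun x => hay _ _ hu) (fun x => hbx _ _ hv) (fun x => hby _ _ hv)
  · rw [symm]; exact cz (hax _ _ hv hu)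
  · exact cz (hxx _ _ hu hv)
  · exact xy _ _ hu hv
  · rw [symm]; exact cz (hbx _ _ hv hu)
  · rw [symm]; exact cz (hay _ _ hv hu)
  · rw [symm]; exact xy _ _ hv hu
  · exact cz (hyy _ _ hu hv)
  · rw [symm]; exact cz (hby _ _ hv hu)
  · exact dd _ _ (fun x => hbx _ _ hu) (fun x => hby _ _ hu) (fun x => hax _ _ hv) (fun x => hay _ _ hv)
  · exact cz (hbx _ _ hu hv)
  · exact cz (hby _ _ hu hv)
  · exact dd _ _ (fun x => hbx _ _ hu) (fun x => hby _ _ hu) (fun x => hbx _ _ hv) (fun x => hby _ _ hv)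

end Setup

def Mu {A : Type*} [Ring A] (e f : A) (B : A → A → A) (s y c : A) : Prop :=
  Cen c ∧ ∀ x, Pc e f x → e * (B y x - s * (y * x + x * y) - c * x) * f = 0

namespace Setup

variable {A : Type*} [Ring A] {e f : A} {B : A → A → A}

theorem muU (S : Setup e f B) {s y c c' : A} (h : Mu e f B s y c) (h' : Mu e f B s y c') :
    c = c' := by
  obtain ⟨x, hx, hx0⟩ := S.exx
  have h1 := h.2 x hx
  have h2 := h'.2 x hx
  rw [← sub_eq_zero]
  refine S.cmulreg (csub h.1 h'.1) ?_ hx0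
  linear_combination (norm := noncomm_ring) h2 - h1 - (c - c') * hx.1 + csub h.1 h'.1 e * x
    - e * (c - c') * hx.2

theorem muAdd (S : Setup e f B) {s y c y' c' : A} (h : Mu e f B s y c) (h' : Mu e f B s y' c') :
    Mu e f B s (y + y') (c + c') := by
  refine ⟨cadd h.1 h'.1, fun x hx => ?_⟩
  rw [S.add]
  linear_combination (norm := noncomm_ring) h.2 x hx + h'.2 x hx

theorem mu12 (S : Setup e f B) (s : A) {y : A} (hy : Pc e f y) : Mu e f B s y 0 := by
  refine ⟨c0, fun x hx => ?_⟩
  have h1 : x * y = 0 := by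
    linear_combination (norm := noncomm_ring) x * S.fx hy - hx.2 * y
  have h2 : y * x = 0 := by
    linear_combination (norm := noncomm_ring) y * S.fx hx - hy.2 * x
  rw [S.Bxx hy hx, h1, h2]; simp

theorem mu21 (S : Setup e f B) {s : A} (hs : Cen s) {y : A} (hy : Pc f e y) : Mu e f B s y 0 := by
  refine ⟨c0, fun x hx => ?_⟩
  have h1 := S.wtB y x
  rw [S.adx hx, S.ady hy, S.negl] at h1
  have h2 : e * B y x = B y x * e := by
    linear_combination (norm := noncomm_ring) h1
  linear_combination (norm := noncomm_ring) h2 * f + B y x * S.ef + hs e * (y * x + x * y) * f - s * S.ex hy * x * f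
    - s * e * x * S.xf hy

theorem mu11 (S : Setup e f B) {s : A} {a z : A} (h : isG e f B a (s * a + z * e)) (hz : Cen z) :
    Mu e f B s a z := by
  refine ⟨hz, fun x hx => ?_⟩
  have h1 : x * a = 0 := by
    linear_combination (norm := noncomm_ring) S.xe hx * a - x * h.1.1
  rw [h.2.2.1 x hx, h1]
  linear_combination (norm := noncomm_ring) e * z * hx.1 * f

theorem mu22 (S : Setup e f B) {s : A} (hs : Cen s) {a z : A} (h : isG f e B a (s * a + z * f)) (hz : Cen z) :
    Mu e f B s a z := by
  refine ⟨hz, fun x hx => ?_⟩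
  have h1 : a * x = 0 := by
    linear_combination (norm := noncomm_ring) a * S.fx hx - h.1.2 * x
  rw [h.2.2.2 x hx, h1]
  linear_combination (norm := noncomm_ring) - e * hs x * a * f - e * hz x * f * f + e * z * hx.2 * f

theorem main (S : Setup e f B) {R : Type*} [CommRing R] [Algebra R A]
    (smul : ∀ (r : R) x y, B (r • x) y = r • B x y) :
    ∃ (s : A) (μ : A →ₗ[R] A), (s = 1 ∨ s = -1) ∧ (∀ x, Cen (μ x)) ∧ 
      ∀ x y, Cen (B x y - s * (x * y + y * x) - (μ x * y + μ y * x)) := by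
  obtain ⟨s, hs1, hE, hF⟩ := S.sign
  have hs : Cen s := by
      intro x; rcases hs1 with rfl | rfl <;> simp
  have ex : ∀ y, ∃ c, Mu e f B s y c := by
    refine S.ind (P := fun y => ∃ c, Mu e f B s y c) ?_ ?_ ?_ ?_ ?_
    · rintro x y ⟨c, h⟩ ⟨c', h'⟩
      exact ⟨_, S.muAdd h h'⟩
    · intro a ha
      obtain ⟨g, hg⟩ := S.gEx ha
      obtain ⟨z, hz, rfl⟩ := hE a g hg
      exact ⟨z, S.mu11 hg hz⟩
    · intro x hx
      exact ⟨0, S.mu12 s hx⟩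
    · intro x hx
      exact ⟨0, S.mu21 hs hx⟩
    · intro a ha
      obtain ⟨g, hg⟩ := S.swap.gEx ha
      obtain ⟨z, hz, rfl⟩ := hF a g hg
      exact ⟨z, S.mu22 hs hg hz⟩
  choose m hm using ex
  let μ : A →ₗ[R] A := 
    { toFun := m
      map_add' := fun x y => S.muU (hm _) (S.muAdd (hm x) (hm y))
      map_smul' := fun r x => by
        refine S.muU (s := s) (hm _) ⟨?_, ?_⟩
        · intro g
          simp only [RingHom.id_apply, smul_mul_assoc, mul_smul_comm, (hm x).1 g]
        · intro z hz
          have := congrArg (fun t => r • t) ((hm x).2 z hz)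
          simp only [smul_zero] at this
          rw [← this, smul]
          simp only [RingHom.id_apply, smul_mul_assoc, mul_smul_comm, ← smul_add, ← smul_sub] }
  have hμ : ∀ x, Mu e f B s x (μ x) := hm
  have μc : ∀ x, Cen (μ x) := fun x => (hm x).1
  refine ⟨s, μ, hs1, μc, ?_⟩
  have A1 : ∀ a, Pc e e a → isG e f B a (s * a + μ a * e) := by
    intro a ha
    obtain ⟨g, hg⟩ := S.gEx ha
    obtain ⟨z, hz, rfl⟩ := hE a g hg
    rwa [S.muU (hμ a) (S.mu11 hg hz)]
  have A2 : ∀ a, Pc f f a → isG f e B a (s * a + μ a * f) := by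
    intro a ha
    obtain ⟨g, hg⟩ := S.swap.gEx ha
    obtain ⟨z, hz, rfl⟩ := hF a g hg
    rwa [S.muU (hμ a) (S.mu22 hs hg hz)]
  have X1 : ∀ a, Pc e f a → μ a = 0 := fun a ha => S.muU (hμ a) (S.mu12 s ha)
  have X2 : ∀ a, Pc f e a → μ a = 0 := fun a ha => S.muU (hμ a) (S.mu21 hs ha)
  apply S.central (fun x y => B x y - s * (x * y + y * x) - (μ x * y + μ y * x))
  · intro x y z
    simp only [S.add, map_add]; noncomm_ring
  · intro x y
    simp only [S.symm x y]; noncomm_ring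
  · intro x y z
    beta_reduce
    have := S.FI x y z
    linear_combination (norm := noncomm_ring) this - hs z * (x * y + y * x) - hs x * (y * z + z * y) - hs y * (z * x + x * z)
      - μc x z * y - μc y z * x - μc y x * z - μc z x * y - μc z y * x - μc x y * z 
  · intro a x ha hx
    have h1 : x * a = 0 := by
      linear_combination (norm := noncomm_ring) S.xe hx * a - x * ha.1
    simp only [(A1 a ha).2.2.1 x hx, X1 x hx, h1]
    linear_combination (norm := noncomm_ring) μ a * hx.1
  · intro a x ha hx
    have h1 : a * x = 0 := by
      linear_combination (norm := noncomm_ring) a * S.ex hx - ha.2 * x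
    simp only [(A1 a ha).2.2.2 x hx, X2 x hx, h1]
    linear_combination (norm := noncomm_ring) - hs x * a - μc a x * e + μ a * hx.2
  · intro a x ha hx
    have h1 : a * x = 0 := by
      linear_combination (norm := noncomm_ring) a * S.fx hx - ha.2 * x
    simp only [(A2 a ha).2.2.2 x hx, X1 x hx, h1]
    linear_combination (norm := noncomm_ring) - hs x * a - μc a x * f + μ a * hx.2
  · intro a x ha hx
    have h1 : x * a = 0 := by
      linear_combination (norm := noncomm_ring) S.xf hx * a - x * ha.1
    simp only [(A2 a ha).2.2.1 x hx, X2 x hx, h1]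
    linear_combination (norm := noncomm_ring) μ a * hx.1
  · intro y x hy hx
    have h1 : x * y = 0 := by
      linear_combination (norm := noncomm_ring) x * S.fx hy - hx.2 * y
    have h2 : y * x = 0 := by
      linear_combination (norm := noncomm_ring) y * S.fx hx - hy.2 * x
    simp [S.Bxx hy hx, h1, h2, X1 x hx, X1 y hy]
  · intro y x hy hx
    have h1 : x * y = 0 := by
      linear_combination (norm := noncomm_ring) x * S.ex hy - hx.2 * y
    have h2 : y * x = 0 := by
      linear_combination (norm := noncomm_ring) y * S.ex hx - hy.2 * x
    simp [S.swap.Bxx hy hx, h1, h2, X2 x hx, X2 y hy]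

end Setup

theorem hom_fin {R A : Type*} [CommRing R] [Ring A] [Algebra R A]
    (hprime : ∀ a b : A, (∀ x : A, a * x * b = 0) → a = 0 ∨ b = 0)
    (hnc : ∃ a b : A, a * b ≠ b * a)
    (l : A ≃ₗ[R] A)
    (hLie : ∀ x y : A, l (x * y - y * x) = l x * l y - l y * l x)
    (m : A →ₗ[R] A) (hm : ∀ x, Cen (l x - m x))
    (op : A → A → A) (hop : op = (fun x y => x * y) ∨ op = (fun x y => - (y * x)))
    (h : ∀ x y, Cen (m (x * y) - op (m x) (m y))) :
    (∀ x y, m (x * y) = op (m x) (m y)) ∧ Function.Injective m := by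
  have cl : ∀ x, Cen (l x) → Cen x := by
    intro x hx g
    have h1 := hLie x g
    rw [hx, sub_self] at h1
    exact sub_eq_zero.1 (l.map_eq_zero_iff.1 h1)
  have cm : ∀ x, Cen (m x) → Cen x := by
    intro x hx
    apply cl
    have := Setup.cadd (hm x) hx
    rwa [sub_add_cancel] at this
  have creg : ∀ z x : A, Cen z → z * x = 0 → z = 0 ∨ x = 0 := by
    intro z x hz h
    apply hprime
    intro y
    rw [hz y, mul_assoc, h, mul_zero]
  have sur : ∀ x, (∀ z, m x * m z = m z * m x) → Cen x := by
    intro x hx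
    apply cm
    intro g
    obtain ⟨w, rfl⟩ := l.surjective g
    have h1 := hm w (m x)
    have h2 := hx w
    linear_combination (norm := noncomm_ring) h2 - h1
  set E : A → A → A := fun x y => m (x * y) - op (m x) (m y) with hE
  have Eadd : ∀ x y z, E (x + y) z = E x z + E y z := by
    intro x y z
    rcases hop with rfl | rfl <;> simp only [hE, add_mul, map_add, mul_add] <;> abel
  -- cocycle
  have coc : ∀ x y z, E x y * m z - E y z * m x = (E x (y * z) - E (x * y) z) ∨ 
      E x y * m z - E y z * m x = -(E x (y * z) - E (x * y) z) := by
    intro x y z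
    have a1 : m (x * y * z) = m (x * (y * z)) := by rw [mul_assoc]
    rcases hop with rfl | rfl
    · left
      have c1 := h y z (m x)
      simp only [hE]
      linear_combination (norm := noncomm_ring) a1 - c1
    · right
      have c1 := h x y (m z)
      simp only [hE]
      linear_combination (norm := noncomm_ring) -a1 + c1
  have coc' : ∀ x y z, Cen (E x y * m z - E y z * m x) := by
    intro x y z
    have := Setup.csub (h x (y * z)) (h (x * y) z)
    rcases coc x y z with h1 | h1 <;> rw [h1]
    · exact this
    · exact Setup.cneg this
  have E0 : ∀ x y, ¬ Cen x → E x y = 0 := by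
    intro x y hx
    have : ∃ z, m z * m x - m x * m z ≠ 0 := by
      by_contra! hh
      apply hx
      apply sur
      intro z
      exact (sub_eq_zero.1 (hh z)).symm
    obtain ⟨z, hz⟩ := this
    have h1 := coc' x y z (m x)
    refine (creg (E x y) _ (h x y) ?_).resolve_right hz
    have h2 := h y z (m x)
    have h3 := h x y (m x)
    change E x y * _ = _ * E x y at h3
    change E y z * _ = _ * E y z at h2
    linear_combination (norm := noncomm_ring) h1 + h2 * m x - h3 * m z 
  have hx1 : ∃ x : A, ¬ Cen x := by
    obtain ⟨a, b, hab⟩ := hnc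
    exact ⟨a, fun h => hab (h b)⟩
  obtain ⟨x1, hx1⟩ := hx1
  have Ez : ∀ x y, E x y = 0 := by
    intro x y
    by_cases hx : Cen x
    · have h1 : ¬ Cen (x + x1) := by
        intro h
        apply hx1
        have := Setup.csub h hx
        rwa [add_sub_cancel_left] at this
      have h2 := Eadd x x1 y
      rw [E0 _ _ h1, E0 _ _ hx1, add_zero] at h2
      exact h2.symm
    · exact E0 x y hx
  have hmul : ∀ x y, m (x * y) = op (m x) (m y) := fun x y => sub_eq_zero.1 (Ez x y)
  refine ⟨hmul, ?_⟩
  rw [injective_iff_map_eq_zero]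
  intro x hx
  have hc : ∀ w, Cen (x * w) := by
    intro w
    apply cm
    rw [hmul, hx]
    rcases hop with rfl | rfl <;> simpa using Setup.c0
  have hcx : Cen x := by simpa using hc 1
  obtain ⟨a, b, hab⟩ := hnc
  refine (creg x (a * b - b * a) hcx ?_).resolve_right (sub_ne_zero.2 hab)
  have h1 := hc a b
  linear_combination (norm := noncomm_ring) h1 - hcx b * a


/-- **Corollary 4.9.**  Let `R` be a commutative ring with `1/2 ∈ R` and let `A` be
a unital prime `R`-algebra containing a nontrivial idempotent `e`, with `f = 1 - e`,
such that `e Z(A) e = Z(eAe) ≠ eAe` and `f Z(A) f = Z(fAf) ≠ fAf`.  Then every Lie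
isomorphism `l : A → A` is of the standard form `l = m + n`, where `m` is an
injective homomorphism or the negative of an injective anti-homomorphism of `A` and
`n : A → Z(A)` is a linear map vanishing on each commutator. -/
theorem stmt18 (R A : Type*) [CommRing R] [Invertible (2 : R)]
    [Ring A] [Algebra R A]
    (hprime : ∀ a b : A, (∀ x : A, a * x * b = 0) → a = 0 ∨ b = 0)
    (e : A) (he : e * e = e) (he0 : e ≠ 0) (he1 : e ≠ 1)
    (f : A) (hf : f = 1 - e)
    (hZe : (fun x => e * x * e) '' (Subring.center A : Set A)
            = {x ∈ Set.range (fun a => e * a * e) |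
                ∀ y ∈ Set.range (fun a => e * a * e), x * y = y * x})
    (hZe' : {x ∈ Set.range (fun a => e * a * e) |
                ∀ y ∈ Set.range (fun a => e * a * e), x * y = y * x}
            ≠ Set.range (fun a => e * a * e))
    (hZf : (fun x => f * x * f) '' (Subring.center A : Set A)
            = {x ∈ Set.range (fun a => f * a * f) |
                ∀ y ∈ Set.range (fun a => f * a * f), x * y = y * x})
    (hZf' : {x ∈ Set.range (fun a => f * a * f) |
                ∀ y ∈ Set.range (fun a => f * a * f), x * y = y * x}
            ≠ Set.range (fun a => f * a * f))
    (l : A ≃ₗ[R] A)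
    (hLie : ∀ x y : A, l (x * y - y * x) = l x * l y - l y * l x) :
    ∃ m nm : A →ₗ[R] A,
      (∀ x : A, l x = m x + nm x) ∧
      Function.Injective m ∧
      ((∀ x y : A, m (x * y) = m x * m y) ∨ (∀ x y : A, m (x * y) = -(m y * m x))) ∧
      (∀ x : A, nm x ∈ Subring.center A) ∧
      (∀ x y : A, nm (x * y - y * x) = 0) := by
  have hfe : e + f = 1 := by rw [hf]; abel
  have hef0 : e * f = 0 := by rw [hf, mul_sub, mul_one, he, sub_self]
  have hfe0 : f * e = 0 := by rw [hf, sub_mul, one_mul, he, sub_self]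
  have hff : f * f = f := by
    linear_combination (norm := noncomm_ring) hfe * f - hef0
  have mem : ∀ p : A, p * p = p → ∀ x, x ∈ Set.range (fun a => p * a * p) ↔ Pc p p x := by
    intro p hp x
    constructor
    · rintro ⟨a, rfl⟩
      refine ⟨?_, ?_⟩
      · change p * (p * a * p) = p * a * p
        rw [← mul_assoc, ← mul_assoc, hp]
      · change p * a * p * p = p * a * p
        rw [mul_assoc, hp]
    · rintro ⟨h1, h2⟩
      exact ⟨x, by change p * x * p = x; rw [h1, h2]⟩
  have ZZ : ∀ p : A, p * p = p → (fun x => p * x * p) '' (Subring.center A : Set A)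
            = {x ∈ Set.range (fun a => p * a * p) |
                ∀ y ∈ Set.range (fun a => p * a * p), x * y = y * x} →
      ∀ w, Pc p p w → (∀ a, Pc p p a → w * a = a * w) → ∃ z, Cen z ∧ w = z * p := by
    intro p hp hZ w hw hc
    have : w ∈ (fun x => p * x * p) '' (Subring.center A : Set A) := by
      rw [hZ]
      exact ⟨(mem p hp w).2 hw, fun y hy => hc y ((mem p hp y).1 hy)⟩
    obtain ⟨z, hz, rfl⟩ := this
    have hz' := Subring.mem_center_iff.1 hz
    refine ⟨z, fun g => (hz' g).symm, ?_⟩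
    change p * z * p = z * p
    rw [hz', mul_assoc, hp]
  have NC : ∀ p : A, p * p = p → {x ∈ Set.range (fun a => p * a * p) |
                ∀ y ∈ Set.range (fun a => p * a * p), x * y = y * x}
            ≠ Set.range (fun a => p * a * p) →
      ∃ a a', Pc p p a ∧ Pc p p a' ∧ a * a' - a' * a ≠ 0 := by
    intro p hp hne
    by_contra! hh
    apply hne
    ext x
    constructor
    · intro h; exact h.1
    · intro h
      refine ⟨h, fun y hy => ?_⟩
      exact sub_eq_zero.1 (hh x y ((mem p hp x).1 h) ((mem p hp y).1 hy))
  have h2 : (algebraMap R A ⅟2) + algebraMap R A ⅟2 = 1 := by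
    rw [← map_add, ← two_mul, mul_invOf_self, map_one]
  have hhc : Cen (algebraMap R A ⅟2) := fun g => Algebra.commutes _ _
  have S : Setup e f (fun y z => l (l.symm y * l.symm z + l.symm z * l.symm y)) :=
    { prime := hprime
      ee := he
      ff := hff
      ef := hef0
      fe := hfe0
      sum := hfe
      e0 := he0
      f0 := by
        intro h
        rw [h, add_zero] at hfe
        exact he1 hfe
      two := by
        intro a ha
        have : a = algebraMap R A ⅟2 * (a + a) := by
          linear_combination (norm := noncomm_ring) -h2 * a
        rw [this, ha, mul_zero]
      half := ⟨_, hhc, h2⟩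
      Ze := ZZ e he hZe
      Zf := ZZ f hff hZf
      nce := NC e he hZe'
      ncf := NC f hff hZf'
      add := by
        intro x y z
        simp only [map_add, add_mul, mul_add]; abel
      symm := by
        intro x y
        rw [add_comm]
      FI := by
        intro x y z
        obtain ⟨x, rfl⟩ := l.surjective x
        obtain ⟨y, rfl⟩ := l.surjective y
        obtain ⟨z, rfl⟩ := l.surjective z
        simp only [LinearEquiv.symm_apply_apply]
        rw [← hLie, ← hLie, ← hLie, ← map_add, ← map_add]
        convert map_zero l
        noncomm_ring
      inv := by
        intro x y z
        obtain ⟨x, rfl⟩ := l.surjective x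
        obtain ⟨y, rfl⟩ := l.surjective y
        obtain ⟨z, rfl⟩ := l.surjective z
        simp only [← hLie, LinearEquiv.symm_apply_apply]
        rw [← map_add]
        congr 1
        noncomm_ring
      assoc := by
        intro x y z
        obtain ⟨x, rfl⟩ := l.surjective x
        obtain ⟨y, rfl⟩ := l.surjective y
        obtain ⟨z, rfl⟩ := l.surjective z
        simp only [← hLie, LinearEquiv.symm_apply_apply]
        rw [← map_sub]
        congr 1
        noncomm_ring }
  obtain ⟨s, μ, hs, μc, hB⟩ := S.main (R := R) (by
    intro r x y
    simp only [map_smul, smul_mul_assoc, mul_smul_comm, ← smul_add])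
  have hnc : ∃ a b : A, a * b ≠ b * a := by
    obtain ⟨a, b, _, _, h⟩ := S.nce
    exact ⟨a, b, sub_ne_zero.1 h⟩
  have hB' : ∀ x y, Cen (l (x * y + y * x) - s * (l x * l y + l y * l x)
      - (μ (l x) * l y + μ (l y) * l x)) := by
    intro x y
    simpa using hB (l x) (l y)
  have cs : ∀ (r : R) (z : A), Cen z → Cen (r • z) := by
    intro r z hz g
    rw [smul_mul_assoc, mul_smul_comm, hz]
  set t := algebraMap R A ⅟2 with ht
  have hsm : ∀ x : A, (⅟2 : R) • x = t * x := fun x => Algebra.smul_def _ _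
  rcases hs with rfl | rfl
  · have key := hom_fin hprime hnc l hLie (l.toLinearMap + (⅟2 : R) • (μ ∘ₗ l.toLinearMap))
      (by
        intro x
        have := Setup.cneg (cs ⅟2 _ (μc (l x)))
        simpa using this) (fun x y => x * y) (Or.inl rfl) (by
        intro x y
        simp only [LinearMap.add_apply, LinearMap.smul_apply, LinearMap.comp_apply,
          LinearEquiv.coe_coe, hsm]
        have c1 := Setup.cmul hhc (hB' x y)
        have c2 := Setup.cmul hhc (μc (l (x * y)))
        have c3 := Setup.cmul (Setup.cmul hhc (μc (l x))) (Setup.cmul hhc (μc (l y)))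
        have := Setup.csub (Setup.cadd c1 c2) c3
        convert this using 1
        have e1 := hLie x y
        have e2 : l (x * y + y * x) + l (x * y - y * x) = l (x * y) + l (x * y) := by
          rw [← map_add, ← map_add]; congr 1; abel
        have e3 := Setup.cmul hhc (μc (l y)) (l x)
        linear_combination (norm := noncomm_ring) t * e1 - t * e2 - h2 * l (x * y)
          + h2 * (l x * l y) + e3)
    refine ⟨_, -((⅟2 : R) • (μ ∘ₗ l.toLinearMap)), ?_, key.2, Or.inl key.1, ?_, ?_⟩
    · intro x; simp
    · intro x
      rw [Subring.mem_center_iff]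
      intro g
      have := Setup.cneg (cs ⅟2 _ (μc (l x))) g
      simpa using this.symm
    · intro x y
      have k1 := key.1 x y
      have k2 := key.1 y x
      simp only [LinearMap.add_apply, LinearMap.smul_apply, LinearMap.comp_apply,
          LinearEquiv.coe_coe, hsm, LinearMap.neg_apply, map_sub] at k1 k2 ⊢
      have e1 := hLie x y
      rw [map_sub] at e1
      have e3 := Setup.cmul hhc (μc (l x)) (l y)
      have e4 := Setup.cmul hhc (μc (l y)) (l x)
      have e5 := Setup.cmul hhc (μc (l x)) (t * μ (l y))
      linear_combination (norm := noncomm_ring) k2 - k1 + e1 - e3 + e4 - e5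
  · have key := hom_fin hprime hnc l hLie (l.toLinearMap - (⅟2 : R) • (μ ∘ₗ l.toLinearMap))
      (by
        intro x
        have := (cs ⅟2 _ (μc (l x)))
        simpa using this) (fun x y => -(y * x)) (Or.inr rfl) (by
        intro x y
        simp only [LinearMap.sub_apply, LinearMap.smul_apply, LinearMap.comp_apply,
          LinearEquiv.coe_coe, hsm]
        have c1 := Setup.cmul hhc (hB' x y)
        have c2 := Setup.cmul hhc (μc (l (x * y)))
        have c3 := Setup.cmul (Setup.cmul hhc (μc (l y))) (Setup.cmul hhc (μc (l x)))
        have := Setup.cadd (Setup.csub c1 c2) c3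
        convert this using 1
        have e1 := hLie x y
        have e2 : l (x * y + y * x) + l (x * y - y * x) = l (x * y) + l (x * y) := by
          rw [← map_add, ← map_add]; congr 1; abel
        have e3 := Setup.cmul hhc (μc (l x)) (l y)
        linear_combination (norm := noncomm_ring) t * e1 - t * e2 - h2 * l (x * y)
          - h2 * (l y * l x) + e3)
    refine ⟨_, ((⅟2 : R) • (μ ∘ₗ l.toLinearMap)), ?_, key.2, Or.inr key.1, ?_, ?_⟩
    · intro x; simp
    · intro x
      rw [Subring.mem_center_iff]
      intro g
      have := (cs ⅟2 _ (μc (l x))) g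
      simpa using this.symm
    · intro x y
      have k1 := key.1 x y
      have k2 := key.1 y x
      simp only [LinearMap.sub_apply, LinearMap.smul_apply, LinearMap.comp_apply,
          LinearEquiv.coe_coe, hsm, map_sub] at k1 k2 ⊢
      have e1 := hLie x y
      rw [map_sub] at e1
      have e3 := Setup.cmul hhc (μc (l x)) (l y)
      have e4 := Setup.cmul hhc (μc (l y)) (l x)
      have e5 := Setup.cmul hhc (μc (l x)) (t * μ (l y))
      linear_combination (norm := noncomm_ring) k2 - k1 + e1 + e3 - e4 - e5
end

section
/- Let X be a Banach space over the real or complex field F and let B(X) be the algebra of all bounded linear operators on X. Then every Lie isomorphism l : B(X) → B(X) has the standard form: l = m + n, where m : B(X) → B(X) is an algebra isomorphism or the negative of an algebra anti-isomorphism, and n : B(X) → F·I is an F-linear map with n([x, y]) = 0 for all x, y ∈ B(X). -/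
section LieIso
variable {F X : Type*} [RCLike F] [NormedAddCommGroup X] [NormedSpace F X]

theorem li_sep2 {v w : X} (hv : v ≠ 0) (h : ∀ r : F, w ≠ r • v) :
    ∃ f : X →L[F] F, f v = 0 ∧ f w = 1 := by
  obtain ⟨f0, hf0⟩ := SeparatingDual.exists_eq_one (R := F) hv
  have hw : w - f0 w • v ≠ 0 := fun h0 => h _ (sub_eq_zero.mp h0)
  obtain ⟨g, hg⟩ := SeparatingDual.exists_eq_one (R := F) hw
  refine ⟨g - g v • f0, by simp [hf0], ?_⟩
  simp at hg ⊢
  linear_combination hg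

theorem li_dual {v w : X} (hv : v ≠ 0) (h : ∀ r : F, w ≠ r • v) :
    ∃ f g : X →L[F] F, f v = 1 ∧ f w = 0 ∧ g v = 0 ∧ g w = 1 := by
  obtain ⟨g, hg0, hg1⟩ := li_sep2 hv h
  obtain ⟨f0, hf0⟩ := SeparatingDual.exists_eq_one (R := F) hv
  exact ⟨f0 - f0 w • g, g, by simp [hg0, hf0], by simp [hg1], hg0, hg1⟩

theorem li_sep3 {v w z : X} {f g : X →L[F] F} (h1 : f v = 1) (h2 : f w = 0) (h3 : g v = 0)
    (h4 : g w = 1) (h : z ≠ f z • v + g z • w) :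
    ∃ k : X →L[F] F, k v = 0 ∧ k w = 0 ∧ k z = 1 := by
  have hw : z - (f z • v + g z • w) ≠ 0 := fun h0 => h (sub_eq_zero.mp h0)
  obtain ⟨k, hk⟩ := SeparatingDual.exists_eq_one (R := F) hw
  refine ⟨k - k v • f - k w • g, by simp [*], by simp [*], ?_⟩
  simp at hk ⊢
  linear_combination hk

theorem li_nonscalar (a : X →L[F] X) (h : ∀ r : F, a ≠ r • 1) :
    ∃ v, v ≠ 0 ∧ ∀ r : F, a v ≠ r • v := by
  by_contra! hc
  obtain ⟨r, hr⟩ := LinearMap.exists_eq_smul_id_of_forall_notLinearIndependent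
    (f := (a : X →ₗ[F] X)) (by
      intro v hv
      have hv0 : v ≠ 0 := by
        have := hv.ne_zero 0
        simpa using this
      obtain ⟨r, hr⟩ := hc v hv0
      exact (LinearIndependent.pair_iff' hv0).mp hv r hr.symm)
  refine h r ?_
  ext x
  have := congrArg (fun f => f x) hr
  simpa using this

theorem li_cubic (x : X →L[F] X) (h : ∀ r : F, x ≠ r • 1)
    (h3 : ∀ a : X →L[F] X, x*x*x*a - 3 • (x*x*a*x) + 3 • (x*a*x*x) - a*x*x*x = x*a - a*x) :
    ∃ (q : X →L[F] X) (s : F), q * q = q ∧ x = q + s • 1 := by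
  have key : ∀ (f : X →L[F] F) (u v : X), f v • x (x (x u)) - (3 * f (x v)) • x (x u)
      + (3 * f (x (x v))) • x u - f (x (x (x v))) • u = f v • x u - f (x v) • u := by
    intro f u v
    have := congrArg (fun b => b v) (h3 (f.smulRight u))
    simp at this
    rw [← this]
    module
  obtain ⟨v, hv0, hv⟩ := li_nonscalar x h
  obtain ⟨f, g, f1, f2, g1, g2⟩ := li_dual hv0 hv
  have h2 : x (x v) = f (x (x v)) • v + g (x (x v)) • x v := by
    by_contra hc
    obtain ⟨k, k1, k2, k3⟩ := li_sep3 f1 f2 g1 g2 hc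
    refine h (k (x (x (x v))) / 3) ?_
    ext u
    have := key k u v
    simp only [k1, k2, k3, zero_smul, mul_zero, mul_one, sub_zero, zero_add] at this
    have h' : (3:F) • x u = k (x (x (x v))) • u := sub_eq_zero.mp this
    simp only [smul_apply, one_apply_eq_self]
    rw [div_eq_inv_mul, mul_smul, ← h', smul_smul]
    norm_num
  set β := f (x (x v)) with hβ
  set α := g (x (x v)) with hα
  have h3v : x (x (x v)) = (α * β) • v + (α^2 + β) • x v := by
    conv_lhs => rw [h2]
    simp only [map_add, map_smul, h2]
    module
  have kg := fun u => key g u v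
  have gx3 : g (x (x (x v))) = α^2 + β := by rw [h3v]; simp [g1, g2]
  simp only [g1, g2, gx3, ← hα] at kg
  have hab : α^2 + 4 * β = 1 := by
    have := congrArg f (kg v)
    simp [f1, f2, ← hβ] at this
    linear_combination - this
  have hq : ∀ u, x (x u) = α • x u + β • u := by
    intro u
    have h' : (3:F) • x (x u) = (3:F) • (α • x u + β • u) := by
      have e : (α ^ 2 + β) = 1 - 3 * β := by linear_combination hab
      have := kg u
      rw [e] at this
      linear_combination (norm := module) (-1 : F) • this
    exact (smul_right_injective X (by norm_num : (3:F) ≠ 0)) h'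
  refine ⟨x - ((α - 1)/2) • 1, (α-1)/2, ?_, by simp⟩
  ext u
  simp [hq]
  have e : β = (1 - α^2)/4 := by linear_combination hab/4
  rw [e]
  module

theorem li_rank_one (q : X →L[F] X) (hq : q * q = q) (h0 : q ≠ 0)
    (h : ∀ u v : X, q u = u → q v = v → u ≠ 0 → ∃ r : F, v = r • u) :
    ∃ (e : X) (ε : X →L[F] F), ε e = 1 ∧ ∀ y, q y = ε y • e := by
  have hqq : ∀ y, q (q y) = q y := fun y => congrArg (fun b => b y) hq
  obtain ⟨y0, hy0⟩ : ∃ y, q y ≠ 0 := by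
    by_contra! hc
    exact h0 (by ext y; simp [hc])
  obtain ⟨f, hf⟩ := SeparatingDual.exists_eq_one (R := F) hy0
  refine ⟨q y0, f.comp q, by simp [hqq, hf], fun y => ?_⟩
  obtain ⟨r, hr⟩ := h (q y0) (q y) (hqq _) (hqq _) hy0
  simp [hr, hf]

theorem li_rank (q : X →L[F] X) (hq : q * q = q) (h0 : q ≠ 0) (h1 : 1 - q ≠ 0)
    (h : ∀ n : X →L[F] X, q * n = n → n * q = 0 → ∀ a, ∃ r : F, n * a * n = r • n) :
    (∃ (e : X) (ε : X →L[F] F), ε e = 1 ∧ ∀ y, q y = ε y • e) ∨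
    (∃ (e : X) (ε : X →L[F] F), ε e = 1 ∧ ∀ y, (1 - q) y = ε y • e) := by
  by_contra! hc
  obtain ⟨hc1, hc2⟩ := hc
  have A : ∃ u1 u2 : X, q u1 = u1 ∧ q u2 = u2 ∧ u1 ≠ 0 ∧ ∀ r : F, u2 ≠ r • u1 := by
    by_contra! hA
    obtain ⟨e, ε, h1, h2⟩ := li_rank_one q hq h0 hA
    obtain ⟨y, hy⟩ := hc1 e ε h1
    exact hy (h2 y)
  have B : ∃ u1 u2 : X, (1 - q) u1 = u1 ∧ (1 - q) u2 = u2 ∧ u1 ≠ 0 ∧ ∀ r : F, u2 ≠ r • u1 := by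
    by_contra! hA
    obtain ⟨e, ε, h1, h2⟩ := li_rank_one (1 - q) (by simp [mul_sub, sub_mul, hq]) h1 hA
    obtain ⟨y, hy⟩ := hc2 e ε h1
    exact hy (h2 y)
  obtain ⟨u1, u2, a1, a2, a3, a4⟩ := A
  obtain ⟨v1, v2, b1, b2, b3, b4⟩ := B
  obtain ⟨f, -, f1, f2, -, -⟩ := li_dual a3 a4
  obtain ⟨g1, g2, c1, c2, c3, c4⟩ := li_dual b3 b4
  have b1' : q v1 = 0 := by simpa using b1
  have b2' : q v2 = 0 := by simpa using b2
  have hqq : ∀ y, q (q y) = q y := fun y => congrArg (fun b => b y) hq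
  obtain ⟨r, hr⟩ := h ((g1.smulRight u1 + g2.smulRight u2) * (1 - q))
    (by ext y; simp [a1, a2]) (by ext y; simp [hqq]) (f.smulRight v1)
  have e1 := congrArg (fun b => b v1) hr
  have e2 := congrArg (fun b => b v2) hr
  simp [b1', b2', c1, c2, c3, c4, f1, f2] at e1 e2
  rcases smul_eq_zero.mp e2.symm with e2 | e2
  · rw [e2] at e1; simp at e1; exact a3 e1
  · exact a4 0 (by simp [e2])

theorem li_main {V : Type*} [AddCommGroup V] [Module F V]
    (ρ : (X →L[F] X) →ₗ[F] (V →ₗ[F] V)) (hρ : Function.Injective ρ)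
    (j : V →ₗ[F] (X →L[F] X)) (ε : V →ₗ[F] F) (e : V)
    (hj : ∀ x y, ρ (j x) y = ε y • x) (he : ε e = 1)
    (l : (X →L[F] X) ≃ₗ[F] (X →L[F] X))
    (hL : ∀ a b, ∃ c, ρ c = ρ a * ρ b - ρ b * ρ a ∧ l c = l a * l b - l b * l a)
    (q : X →L[F] X) (e' : X) (ε' : X →L[F] F) (he' : ε' e' = 1) (hq : ∀ y, q y = ε' y • e')
    (lam : F) (hp : l (j e) = q + lam • 1) :
    ∃ (T : V →ₗ[F] X) (c : (X →L[F] X) →ₗ[F] F), Function.Bijective T ∧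
      ∀ a x, l a (T x) = T (ρ a x) + c a • T x := by
  have hL' : ∀ a b c, ρ c = ρ a * ρ b - ρ b * ρ a → l c = l a * l b - l b * l a := by
    intro a b c hc
    obtain ⟨d, hd, hd'⟩ := hL a b
    rw [hρ (hc.trans hd.symm), hd']
  have hL'' : ∀ a b c, l c = l a * l b - l b * l a → ρ c = ρ a * ρ b - ρ b * ρ a := by
    intro a b c hc
    obtain ⟨d, hd, hd'⟩ := hL a b
    rw [l.injective (hc.trans hd'.symm), hd]
  obtain ⟨T, hT⟩ : ∃ T : V →ₗ[F] X, ∀ x, T x = l (j x) e' - (lam * ε x) • e' := by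
    refine ⟨{ toFun := fun x => l (j x) e' - (lam * ε x) • e', map_add' := ?_, map_smul' := ?_ },
      fun x => rfl⟩
    · intro x y
      simp
      module
    · intro r x
      simp
      module
  have hTe : T e = e' := by
    rw [hT, hp, he]; simp [hq, he']
  -- images of the (1-p)Ap part
  have hw : ∀ u, ε u = 0 → (∀ y, l (j u) y = ε' y • T u) ∧ ε' (T u) = 0 := by
    intro u hu
    have h1 := hL' (j e) (j u) (-(j u)) (by
      ext y
      simp [hj, hu, he])
    rw [hp, map_neg] at h1
    have h2 : ∀ y, - l (j u) y = ε' (l (j u) y) • e' - ε' y • l (j u) e' := by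
      intro y
      have := congrArg (fun b => b y) h1
      simp [hq] at this
      exact this
    have hTu : T u = l (j u) e' := by rw [hT, hu]; simp
    have h3 : ∀ y, ε' (l (j u) y) = 0 := by
      have h4 : ε' (l (j u) e') = 0 := by
        have := congrArg ε' (h2 e')
        simp [he'] at this
        exact this
      intro y
      have := congrArg ε' (h2 y)
      simp [he', h4] at this
      linear_combination (-1/2 : F) * this
    refine ⟨fun y => ?_, by rw [hTu]; exact h3 _⟩
    have := h2 y
    rw [h3] at this
    rw [hTu]
    simpa using this
  have hεT : ∀ x, ε' (T x) = ε x := by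
    intro x
    have h1 : ε (x - ε x • e) = 0 := by simp [he]
    have := (hw _ h1).2
    rw [map_sub, map_smul, hTe, map_sub, map_smul, he'] at this
    simp at this
    linear_combination this
  have hinj : Function.Injective T := by
    rw [injective_iff_map_eq_zero]
    intro u hu
    have h0 : ε u = 0 := by rw [← hεT, hu]; simp
    have h1 : l (j u) = 0 := by
      ext y
      rw [(hw u h0).1, hu]; simp
    have h2 : j u = 0 := by simpa using h1
    have := hj u e
    rw [h2, he] at this
    simpa using this.symm
  have hsurj0 : ∀ y, ε' y = 0 → ∃ u, T u = y := by
    intro y hy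
    obtain ⟨b, hb⟩ := l.surjective (ε'.smulRight y)
    have h1 := hL'' (j e) b (-b) (by
      rw [map_neg, hp, hb]
      ext z
      simp [hq, hy, he']
      module)
    have h2 : ∀ z, - ρ b z = ε (ρ b z) • e - ε z • ρ b e := by
      intro z
      have := congrArg (fun b => b z) h1
      simp [hj] at this
      exact this
    have h4 : ε (ρ b e) = 0 := by
      have := congrArg ε (h2 e)
      simp [he] at this
      exact this
    have h3 : ∀ z, ε (ρ b z) = 0 := by
      intro z
      have := congrArg ε (h2 z)
      simp [he, h4] at this
      linear_combination (-1/2 : F) * this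
    have h5 : b = j (ρ b e) := by
      apply hρ
      ext z
      have := h2 z
      rw [h3] at this
      rw [hj]
      simpa using this
    refine ⟨ρ b e, ?_⟩
    rw [hT, ← h5, hb, h4]
    simp [he']
  have hsurj : Function.Surjective T := by
    intro y
    obtain ⟨u, hu⟩ := hsurj0 (y - ε' y • e') (by simp [he'])
    exact ⟨u + ε' y • e, by simp [hu, hTe]⟩
  let P : (X →L[F] X) → Prop := fun a => ∃ k : F, ∀ x, l a (T x) = T (ρ a x) + k • T x
  have hPadd : ∀ a b, P a → P b → P (a + b) := by
    rintro a b ⟨k, hk⟩ ⟨k', hk'⟩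
    refine ⟨k + k', fun x => ?_⟩
    simp only [map_add, add_apply, LinearMap.add_apply, hk, hk']
    module
  have hP01 : ∀ u, ε u = 0 → P (j u) := by
    intro u hu
    refine ⟨0, fun x => ?_⟩
    rw [(hw u hu).1, hεT, hj]; simp
  have hP10 : ∀ d, ρ d = ρ (j e) * ρ d - ρ d * ρ (j e) → P d := by
    intro d hd
    have h1 := hL' _ _ _ hd
    have h2 : ∀ y, l d y = ε' (l d y) • e' - ε' y • l d e' := by
      intro y
      have := congrArg (fun b => b y) h1
      simp [hp, hq] at this
      exact this
    have h3 : ∀ y, ρ d y = ε (ρ d y) • e - ε y • ρ d e := by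
      intro y
      have := congrArg (fun b => b y) hd
      simp [hj] at this
      exact this
    have h4 : l d e' = 0 := by
      have a1 := h2 e'
      have a2 := congrArg ε' a1
      simp [he'] at a2
      rw [he', a2] at a1
      simp at a1
      have : (2:F) • l d e' = 0 := by rw [two_smul]; nth_rewrite 1 [a1]; simp
      simpa using this
    have h5 : ρ d e = 0 := by
      have a1 := h3 e
      have a2 := congrArg ε a1
      simp [he] at a2
      rw [he, a2] at a1
      simp at a1
      have : (2:F) • ρ d e = 0 := by rw [two_smul]; nth_rewrite 1 [a1]; simp
      simpa using this
    have h6 : ∀ u, ε u = 0 → ε' (l d (T u)) = ε (ρ d u) := by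
      intro u hu
      by_cases hu0 : u = 0
      · simp [hu0]
      obtain ⟨c, hc, hc'⟩ := hL d (j u)
      have h7 := hL' c (j u) ((-2 * ε (ρ d u)) • j u) (by
        ext y
        simp [hc, hj, hu]
        module)
      have h8 := congrArg (fun b => b e') h7
      simp [hc', (hw u hu).1, (hw u hu).2, he'] at h8
      have hTu : T u ≠ 0 := fun h => hu0 (hinj (by simpa using h))
      have h9 : (2 * (ε' (l d (T u)) - ε (ρ d u))) • T u = 0 := by
        linear_combination (norm := module) h8
      rcases smul_eq_zero.mp h9 with h | h
      · linear_combination h / 2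
      · exact absurd h hTu
    refine ⟨0, fun x => ?_⟩
    have h7 := h6 (x - ε x • e) (by simp [he])
    simp [hTe, h4, h5] at h7
    rw [h2, h3, h4, h5, h7]
    simp [hTe]
  have hP00 : ∀ a, ρ a * ρ (j e) - ρ (j e) * ρ a = 0 → P a := by
    intro a ha
    have h1 := hL' a (j e) 0 (by rw [ha, map_zero])
    have h2 : ∀ y, ε' y • l a e' = ε' (l a y) • e' := by
      intro y
      have := congrArg (fun b => b y) h1
      simp [hp, hq] at this
      exact (sub_eq_zero.mp this.symm)
    have h3 : ∀ y, ε y • ρ a e = ε (ρ a y) • e := by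
      intro y
      have := congrArg (fun b => b y) ha
      simp [hj] at this
      exact (sub_eq_zero.mp this)
    have h2e := h2 e'
    have h3e := h3 e
    rw [he', one_smul] at h2e
    rw [he, one_smul] at h3e
    have h2c : ∀ y, ε' (l a y) = ε' y * ε' (l a e') := by
      intro y
      have := congrArg ε' (h2 y)
      simp [he'] at this
      exact this.symm
    have h3c : ∀ y, ε (ρ a y) = ε y * ε (ρ a e) := by
      intro y
      have := congrArg ε (h3 y)
      simp [he] at this
      exact this.symm
    set c' := ε' (l a e') with hc'
    set c := ε (ρ a e) with hc
    have hu : ∀ u, ε u = 0 → l a (T u) = T (ρ a u) + (c' - c) • T u := by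
      intro u hu
      have h4 := hL' a (j u) (j (ρ a u - c • u)) (by
        ext y
        simp [hj, h3c]
        module)
      have h5 : ε (ρ a u - c • u) = 0 := by simp [h3c, hu]
      have h6 := congrArg (fun b => b e') h4
      simp only [(hw _ h5).1] at h6
      simp [(hw u hu).1, he', ← hc'] at h6
      linear_combination (norm := module) -h6
    refine ⟨c' - c, fun x => ?_⟩
    have h5 := hu (x - ε x • e) (by simp [he])
    simp only [map_sub, map_smul, hTe, h2e, h3e] at h5
    linear_combination (norm := module) h5
  have hPall : ∀ a, P a := by
    intro a
    obtain ⟨c, hc, -⟩ := hL (j e) a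
    set u := ρ a e - ε (ρ a e) • e with hu
    have hεu : ε u = 0 := by simp [hu, he]
    have h1 : P (c + j u) := by
      apply hP10
      ext y
      simp [hc, hj, he, hu]
      try module
    have h2 : P (a - (c + j u) - j u) := by
      apply hP00
      ext y
      simp [hc, hj, he, hu]
      try module
    have := hPadd _ _ (hPadd _ _ h2 h1) (hP01 u hεu)
    rwa [show a - (c + j u) - j u + (c + j u) + j u = a by abel] at this
  obtain ⟨c, hc⟩ : ∃ c : (X →L[F] X) →ₗ[F] F, ∀ a, c a = ε' (l a e' - T (ρ a e)) := by
    refine ⟨{ toFun := fun a => ε' (l a e' - T (ρ a e)), map_add' := ?_, map_smul' := ?_ },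
      fun x => rfl⟩
    · intro x y
      simp
      ring
    · intro r x
      simp
      ring
  refine ⟨T, c, ⟨hinj, hsurj⟩, fun a x => ?_⟩
  obtain ⟨k, hk⟩ := hPall a
  have : c a = k := by
    rw [hc]
    have := hk e
    rw [hTe] at this
    rw [this]
    simp [he']
  rw [this, hk]

theorem li_assemble {V : Type*} [AddCommGroup V] [Module F V]
    (ρ : (X →L[F] X) →ₗ[F] (V →ₗ[F] V)) (hρ : Function.Injective ρ) (hρ1 : ρ 1 = 1)
    (l : (X →L[F] X) ≃ₗ[F] (X →L[F] X))
    (T : V →ₗ[F] X) (c : (X →L[F] X) →ₗ[F] F) (hT : Function.Bijective T)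
    (h : ∀ a x, l a (T x) = T (ρ a x) + c a • T x) :
    ∃ m nm : (X →L[F] X) →ₗ[F] (X →L[F] X), (∀ x, l x = m x + nm x) ∧
      Function.Bijective m ∧ (∀ x, ∃ r : F, nm x = r • (1 : X →L[F] X)) ∧
      (∀ a b d, ρ d = ρ a * ρ b → m d = m a * m b) := by
  let nm : (X →L[F] X) →ₗ[F] (X →L[F] X) := c.smulRight 1
  let m : (X →L[F] X) →ₗ[F] (X →L[F] X) := l.toLinearMap - nm
  have hnm : ∀ a, nm a = c a • 1 := fun a => rfl
  have hml : ∀ a, m a = l a - nm a := fun a => rfl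
  have hm : ∀ a x, m a (T x) = T (ρ a x) := by
    intro a x
    rw [hml, hnm]
    simp [h]
  have hm1 : m 1 = 1 := by
    ext y
    obtain ⟨x, rfl⟩ := hT.2 y
    simp [hm, hρ1]
  refine ⟨m, nm, fun x => by simp [hml], ⟨?_, ?_⟩, fun x => ⟨c x, hnm x⟩, ?_⟩
  · rw [injective_iff_map_eq_zero]
    intro a ha
    apply hρ
    ext x
    apply hT.1
    rw [← hm, ha]
    simp
  · intro b
    obtain ⟨a, rfl⟩ := l.surjective b
    refine ⟨a + c a • 1, ?_⟩
    rw [map_add, map_smul, hm1, hml, hnm]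
    simp
  · intro a b d hd
    ext y
    obtain ⟨x, rfl⟩ := hT.2 y
    simp [hm, hd]

theorem li_nm (l m nm : (X →L[F] X) →ₗ[F] (X →L[F] X))
    (hLie : ∀ x y : X →L[F] X, l (x * y - y * x) = l x * l y - l y * l x)
    (h1 : ∀ x, l x = m x + nm x) (h2 : ∀ x, ∃ r : F, nm x = r • (1 : X →L[F] X))
    (h3 : ∀ x y, m (x * y - y * x) = m x * m y - m y * m x) (x y : X →L[F] X) :
    nm (x * y - y * x) = 0 := by
  have h := hLie x y
  obtain ⟨r, hr⟩ := h2 x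
  obtain ⟨s, hs⟩ := h2 y
  rw [h1, h1 x, h1 y, h3, hr, hs] at h
  have : nm (x * y - y * x) = (m x + r • 1) * (m y + s • 1) - (m y + s • 1) * (m x + r • 1)
    - (m x * m y - m y * m x) := by rw [← h]; abel
  rw [this]
  simp [mul_add, add_mul]
  rw [smul_comm r s]
  abel

theorem li_quad (l : (X →L[F] X) ≃ₗ[F] (X →L[F] X))
    (hLie : ∀ x y : X →L[F] X, l (x * y - y * x) = l x * l y - l y * l x)
    (e f : X) (ε η : X →L[F] F) (h1 : ε e = 1) (h2 : ε f = 0) (h4 : η f = 1) :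
    ∃ (q : X →L[F] X) (s : F), l (ε.smulRight e) = q + s • 1 ∧
    ((∃ (e : X) (ε : X →L[F] F), ε e = 1 ∧ ∀ y, q y = ε y • e) ∨
    (∃ (e : X) (ε : X →L[F] F), ε e = 1 ∧ ∀ y, (1 - q) y = ε y • e)) := by
  set p := ε.smulRight e with hp
  have hpp : p * p = p := by ext y; simp [hp, h1]
  have hns : ∀ r : F, l p ≠ r • 1 := by
    intro r hr
    have h := hLie p (η.smulRight e)
    rw [hr] at h
    simp only [smul_mul_assoc, mul_smul_comm, one_mul, mul_one, sub_self] at h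
    have h' := congrArg (fun b => b f) ((map_eq_zero_iff l l.injective).mp h)
    simp [hp, h1, h2, h4] at h'
    rw [h'] at h1
    simp at h1
  obtain ⟨q, s, hq, hqs⟩ := li_cubic (l p) hns (by
    intro a
    obtain ⟨b, rfl⟩ := l.surjective a
    have k1 := hLie p b
    have k2 := hLie p (p * b - b * p)
    have k3 := hLie p (p * (p * b - b * p) - (p * b - b * p) * p)
    have k4 : p * (p * (p * b - b * p) - (p * b - b * p) * p)
      - (p * (p * b - b * p) - (p * b - b * p) * p) * p = p * b - b * p := by
      simp only [mul_sub, sub_mul, ← mul_assoc, hpp]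
      simp only [mul_assoc, hpp]
      abel
    rw [k4, k2, k1] at k3
    rw [k3]
    noncomm_ring)
  refine ⟨q, s, hqs, li_rank q hq ?_ ?_ ?_⟩
  · rintro rfl
    exact hns s (by simpa using hqs)
  · intro h
    have : q = 1 := (sub_eq_zero.mp h).symm
    refine hns (1 + s) ?_
    rw [hqs, this, add_smul, one_smul]
  · intro n hn1 hn2 a
    obtain ⟨n0, rfl⟩ := l.surjective n
    obtain ⟨b, rfl⟩ := l.surjective a
    have hnn : l n0 * l n0 = 0 := by
      rw [← hn1, mul_assoc, ← mul_assoc (l n0), hn2]; simp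
    have g1 : p * n0 - n0 * p = n0 := by
      apply l.injective
      rw [hLie, hqs]
      simp [mul_add, add_mul, hn1, hn2]
    have g4 : n0 * p = 0 := by
      have := congrArg (fun b => b * p) g1
      simp only [sub_mul, mul_assoc, hpp] at this
      have t : p * (n0 * p) = (2:F) • (n0 * p) := by
        rw [two_smul]; exact (sub_eq_iff_eq_add.mp this)
      have t2 := congrArg (fun b => p * b) t
      simp only [← mul_assoc, hpp, mul_smul_comm] at t2
      have t3 : (1:F) • (p * n0 * p) = 0 := by
        linear_combination (norm := module) -t2
      rw [one_smul, mul_assoc, t] at t3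
      simpa using t3
    have g3 : p * n0 = n0 := by
      rw [g4, sub_zero] at g1
      exact g1
    have hn0 : ∀ y, n0 y = ε (n0 y) • e := by
      intro y
      have := congrArg (fun b => b y) g3
      simp [hp] at this
      exact this.symm
    have g5 : n0 * n0 = 0 := by
      rw [← g3, mul_assoc, ← mul_assoc n0, g4]; simp
    have g6 : n0 * b * n0 = ε (n0 (b e)) • n0 := by
      ext y
      have := hn0 y
      change n0 (b (n0 y)) = ε (n0 (b e)) • n0 y
      rw [this, map_smul, map_smul]
      conv_lhs => rw [hn0 (b e)]
      rw [smul_comm]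
    have g7 : n0 * (n0 * b - b * n0) - (n0 * b - b * n0) * n0 = (-2 * ε (n0 (b e))) • n0 := by
      rw [mul_smul, ← g6]
      simp only [mul_sub, sub_mul, ← mul_assoc, g5]
      simp only [mul_assoc, g5]
      simp
      module
    refine ⟨ε (n0 (b e)), ?_⟩
    have g8 := congrArg l g7
    rw [hLie, hLie, map_smul] at g8
    simp only [mul_sub, sub_mul, ← mul_assoc, hnn] at g8
    simp only [mul_assoc, hnn] at g8
    simp only [← mul_assoc, zero_mul, mul_zero] at g8
    linear_combination (norm := module) (-1/2 : F) • g8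
end LieIso

/-- **Corollary 4.10.**  Let `X` be a Banach space over the real or complex field
`F` and let `B(X)` be the algebra of all bounded linear operators on `X`.  Then
every Lie isomorphism `l : B(X) → B(X)` has the standard form `l = m + n`, where `m`
is an algebra isomorphism or the negative of an algebra anti-isomorphism of `B(X)`
and `n : B(X) → F·I` is a linear map vanishing on each commutator. -/
theorem stmt19 (F X : Type*) [RCLike F] [NormedAddCommGroup X] [NormedSpace F X]
    [CompleteSpace X]
    (l : (X →L[F] X) ≃ₗ[F] (X →L[F] X))
    (hLie : ∀ x y : X →L[F] X, l (x * y - y * x) = l x * l y - l y * l x) :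
    ∃ m nm : (X →L[F] X) →ₗ[F] (X →L[F] X),
      (∀ x : X →L[F] X, l x = m x + nm x) ∧
      Function.Bijective m ∧
      ((∀ x y : X →L[F] X, m (x * y) = m x * m y) ∨
        (∀ x y : X →L[F] X, m (x * y) = -(m y * m x))) ∧
      (∀ x : X →L[F] X, ∃ r : F, nm x = r • (1 : X →L[F] X)) ∧
      (∀ x y : X →L[F] X, nm (x * y - y * x) = 0) := by
  by_cases hsc : ∀ a : X →L[F] X, ∃ r : F, a = r • (1 : X →L[F] X)
  · refine ⟨LinearMap.id, l.toLinearMap - LinearMap.id, by simp, Function.bijective_id,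
      Or.inl (by simp), fun x => hsc _, fun x y => ?_⟩
    obtain ⟨r, rfl⟩ := hsc x
    simp
  push Not at hsc
  obtain ⟨a, ha⟩ := hsc
  obtain ⟨e, he0, hf⟩ := li_nonscalar a ha
  obtain ⟨ε, η, h1, h2, h3, h4⟩ := li_dual he0 hf
  obtain ⟨q, s, hqs, hq⟩ := li_quad l hLie e (a e) ε η h1 h2 h4
  rcases hq with ⟨e', ε', he', hq⟩ | ⟨e', ε', he', hq⟩
  · let ρ : (X →L[F] X) →ₗ[F] (X →ₗ[F] X) := ContinuousLinearMap.coeLM F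
    have hρ : Function.Injective ρ := ContinuousLinearMap.coe_injective
    have hρm : ∀ a b, ρ (a * b) = ρ a * ρ b := fun a b => rfl
    let j : X →ₗ[F] (X →L[F] X) :=
      { toFun := fun x => ε.smulRight x
        map_add' := fun x y => by ext; simp
        map_smul' := fun r x => by ext z; exact smul_comm (ε z) r x }
    obtain ⟨T, c, hT, hTc⟩ := li_main ρ hρ j (ε : X →ₗ[F] F) e (fun x y => rfl) h1 l
      (fun a b => ⟨a * b - b * a, by rw [map_sub, hρm, hρm], hLie a b⟩) q e' ε' he' hq s hqs
    obtain ⟨m, nm, k1, k2, k3, k4⟩ := li_assemble ρ hρ rfl l T c hT hTc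
    have k5 : ∀ x y, m (x * y) = m x * m y := fun x y => k4 x y _ (hρm x y)
    exact ⟨m, nm, k1, k2, Or.inl k5, k3, li_nm l.toLinearMap m nm hLie k1 k3
      (fun x y => by rw [map_sub, k5, k5])⟩
  · let ρ : (X →L[F] X) →ₗ[F] ((X →L[F] F) →ₗ[F] (X →L[F] F)) :=
      { toFun := fun a =>
          { toFun := fun φ => φ.comp a
            map_add' := fun x y => by ext; simp
            map_smul' := fun r x => by ext; simp }
        map_add' := fun x y => by ext; simp
        map_smul' := fun r x => by ext; simp }
    have hρa : ∀ a φ x, ρ a φ x = φ (a x) := fun a φ x => rfl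
    have hρ : Function.Injective ρ := by
      intro a b hab
      ext x
      rw [SeparatingDual.eq_iff_forall_dual_eq (R := F)]
      intro g
      rw [← hρa, ← hρa, hab]
    have hρm : ∀ a b, ρ (b * a) = ρ a * ρ b := fun a b => rfl
    let j : (X →L[F] F) →ₗ[F] (X →L[F] X) :=
      { toFun := fun φ => φ.smulRight e
        map_add' := fun x y => by ext; simp [add_smul]
        map_smul' := fun r x => by ext; simp [mul_smul] }
    let E : (X →L[F] F) →ₗ[F] F :=
      { toFun := fun φ => φ e
        map_add' := fun x y => by simp
        map_smul' := fun r x => by simp }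
    let l' : (X →L[F] X) ≃ₗ[F] (X →L[F] X) := l.trans (LinearEquiv.neg F)
    have hl' : ∀ x, l' x = - l x := fun x => rfl
    obtain ⟨T, c, hT, hTc⟩ := li_main ρ hρ j E ε
      (fun x y => by
        ext z
        show y (x z • e) = y e * x z
        simp [mul_comm]) h1 l'
      (fun a b => ⟨b * a - a * b, by rw [map_sub, hρm, hρm], by
        rw [hl', hl', hl', hLie]; noncomm_ring⟩) (1 - q) e' ε' he' hq (-1 - s) (by
          rw [hl']
          show - l (ε.smulRight e) = _
          rw [hqs]; module)
    obtain ⟨m, nm, k1, k2, k3, k4⟩ := li_assemble ρ hρ rfl l' T c hT hTc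
    have k5 : ∀ x y, m (x * y) = m y * m x := fun x y => k4 y x _ (hρm y x)
    have k1' : ∀ x, l x = (-m) x + (-nm) x := by
      intro x
      have := k1 x
      rw [hl'] at this
      rw [LinearMap.neg_apply, LinearMap.neg_apply, ← neg_add, ← this, neg_neg]
    have k3' : ∀ x, ∃ r : F, (-nm) x = r • (1 : X →L[F] X) := by
      intro x
      obtain ⟨r, hr⟩ := k3 x
      exact ⟨-r, by rw [LinearMap.neg_apply, hr, neg_smul]⟩
    refine ⟨-m, -nm, k1', ?_, Or.inr ?_, k3', li_nm l.toLinearMap (-m) (-nm) hLie k1' k3' ?_⟩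
    · exact (Equiv.neg _).bijective.comp k2
    · intro x y
      simp [k5]
    · intro x y
      simp [k5]
end
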